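/- arXiv:1105.4511 — 5 statements merged into one kernel-verified Lean document; each statement's English description precedes it below -/
import Mathlib

section
/- Let d ≥ 1 and let h : (0,∞) → (0,∞) be continuous. Then the action density φ : (0,∞) × ℝ^d → ℝ defined by φ(ρ,w) := |w|²/h(ρ) is a convex function of the pair (ρ,w) if and only if h is concave on (0,∞). -/
open Set

/-!
The idea is the duality `t ^ 2 / y = max_c (2 * c * t - c ^ 2 * y)` for `y > 0`, attained at
`c = t / y`. If `h` is concave, `‖w‖ ^ 2 / h ρ` is thus a maximum over `c ≥ 0` of the functions
`2 * c * ‖w‖ - c ^ 2 * h ρ`, which are convex in `(ρ, w)`. Conversely, for a unit vector `e` the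
action density takes the value `h ρ` at `(ρ, h ρ • e)`, and comparing its convexity along these
points with the lower bound for `c = 1` gives the concavity of `h`.
-/

section LinearOrderedField

variable {𝕜 : Type*} [Field 𝕜] [LinearOrder 𝕜] [IsStrictOrderedRing 𝕜]

theorem two_mul_sub_sq_mul_le_sq_div (c t : 𝕜) {y : 𝕜} (hy : 0 < y) :
    2 * c * t - c ^ 2 * y ≤ t ^ 2 / y := by
  rw [le_div_iff₀ hy]
  linarith [sq_nonneg (t - c * y)]

theorem convexOn_sq_div {E : Type*} [AddCommMonoid E] [SMul 𝕜 E] {s : Set E} {f g : E → 𝕜}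
    (hf : ConvexOn 𝕜 s f) (hf_nonneg : ∀ x ∈ s, 0 ≤ f x)
    (hg : ConcaveOn 𝕜 s g) (hg_pos : ∀ x ∈ s, 0 < g x) :
    ConvexOn 𝕜 s (fun x => f x ^ 2 / g x) := by
  refine ⟨hf.1, fun x hx y hy a b ha hb hab => ?_⟩
  have hz : a • x + b • y ∈ s := hf.1 hx hy ha hb hab
  have hfz := hf.2 hx hy ha hb hab
  have hgz := hg.2 hx hy ha hb hab
  have hgz_pos := hg_pos _ hz
  set z := a • x + b • y
  set c := f z / g z with hc
  have hc_nonneg : 0 ≤ c := div_nonneg (hf_nonneg z hz) hgz_pos.le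
  simp only [smul_eq_mul] at hfz hgz ⊢
  calc f z ^ 2 / g z = 2 * c * f z - c ^ 2 * g z := by rw [hc]; field_simp; ring
    _ ≤ 2 * c * (a * f x + b * f y) - c ^ 2 * (a * g x + b * g y) := by gcongr
    _ = a * (2 * c * f x - c ^ 2 * g x) + b * (2 * c * f y - c ^ 2 * g y) := by ring
    _ ≤ a * (f x ^ 2 / g x) + b * (f y ^ 2 / g y) := by
      gcongr
      · exact two_mul_sub_sq_mul_le_sq_div c (f x) (hg_pos x hx)
      · exact two_mul_sub_sq_mul_le_sq_div c (f y) (hg_pos y hy)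

end LinearOrderedField

section NormedSpace

variable {E F : Type*} [AddCommMonoid E] [Module ℝ E] {s : Set E} {h : E → ℝ}

theorem convexOn_norm_sq_div_of_concaveOn [SeminormedAddCommGroup F] [NormedSpace ℝ F]
    (hpos : ∀ x ∈ s, 0 < h x) (hconc : ConcaveOn ℝ s h) :
    ConvexOn ℝ (Prod.fst ⁻¹' s) (fun p : E × F => ‖p.2‖ ^ 2 / h p.1) := by
  have h_fst : ConcaveOn ℝ (Prod.fst ⁻¹' s) (fun p : E × F => h p.1) :=
    hconc.comp_linearMap (LinearMap.fst ℝ E F)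
  have norm_snd : ConvexOn ℝ univ (fun p : E × F => ‖p.2‖) :=
    convexOn_univ_norm.comp_linearMap (LinearMap.snd ℝ E F)
  exact convexOn_sq_div (norm_snd.subset (subset_univ _) h_fst.1) (fun p _ => norm_nonneg p.2)
    h_fst (fun p hp => hpos p.1 hp)

variable [NormedAddCommGroup F] [NormedSpace ℝ F] [Nontrivial F]

theorem concaveOn_of_convexOn_norm_sq_div (hpos : ∀ x ∈ s, 0 < h x)
    (hconv : ConvexOn ℝ (Prod.fst ⁻¹' s) (fun p : E × F => ‖p.2‖ ^ 2 / h p.1)) :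
    ConcaveOn ℝ s h := by
  have hs : Convex ℝ s := (hconv.comp_linearMap (LinearMap.inl ℝ E F)).1
  obtain ⟨e, he⟩ := exists_norm_eq F zero_le_one
  have norm_sq_smul (r : ℝ) : ‖r • e‖ ^ 2 = r ^ 2 := by
    rw [norm_smul, he, mul_one, Real.norm_eq_abs, sq_abs]
  have sq_div_self {x : E} (hx : x ∈ s) : h x ^ 2 / h x = h x := by
    rw [sq, mul_div_cancel_right₀ _ (hpos x hx).ne']
  refine ⟨hs, fun x hx y hy a b ha hb hab => ?_⟩
  set S := a • h x + b • h y with hS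
  have h_upper : S ^ 2 / h (a • x + b • y) ≤ S := by
    have key := hconv.2 (x := (x, h x • e)) hx (y := (y, h y • e)) hy ha hb hab
    simpa only [Prod.smul_mk, Prod.mk_add_mk, ← smul_assoc, ← add_smul, ← hS, norm_sq_smul,
      sq_div_self hx, sq_div_self hy] using key
  have h_lower := two_mul_sub_sq_mul_le_sq_div 1 S (hpos _ (hs hx hy ha hb hab))
  linarith

theorem action_density_convex_iff_concave_general (hpos : ∀ x ∈ s, 0 < h x) :
    ConvexOn ℝ (Prod.fst ⁻¹' s) (fun p : E × F => ‖p.2‖ ^ 2 / h p.1) ↔ ConcaveOn ℝ s h :=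
  ⟨concaveOn_of_convexOn_norm_sq_div hpos, convexOn_norm_sq_div_of_concaveOn hpos⟩

end NormedSpace

/-- For a continuous positive function `h` on `(0,∞)`, the action density
`φ(ρ, w) = ‖w‖² / h(ρ)` on `(0,∞) × ℝᵈ` is convex (jointly in `(ρ, w)`) if and only if `h`
is concave on `(0,∞)`. -/
theorem action_density_convex_iff_concave
    (d : ℕ) (hd : 1 ≤ d) (h : ℝ → ℝ)
    (hcont : ContinuousOn h (Ioi 0))
    (hpos : ∀ x ∈ Ioi (0 : ℝ), 0 < h x) :
    ConvexOn ℝ {p : ℝ × EuclideanSpace ℝ (Fin d) | 0 < p.1}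
        (fun p : ℝ × EuclideanSpace ℝ (Fin d) => ‖p.2‖ ^ 2 / h p.1) ↔
      ConcaveOn ℝ (Ioi 0) h := by
  have : Nonempty (Fin d) := ⟨⟨0, hd⟩⟩
  exact action_density_convex_iff_concave_general hpos
end

section
/- Let h : (0,∞) → (0,∞) be concave and nondecreasing, and let ψ : (0,∞) → ℝ be twice continuously differentiable with ψ''(x) = 1/h(x) for all x > 0, ψ convex, and lim_{x→0⁺} ψ(x) = 0. Then ψ satisfies McCann's conditions: for every x > 0, x·ψ'(x) − ψ(x) ≥ 0 and x²·ψ''(x) − x·ψ'(x) + ψ(x) ≥ 0. Equivalently, the map s ↦ e^{s} ψ(e^{−s}) is convex and nonincreasing on ℝ. -/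
open Set

/-!
For an entropy density `f`, the pressure `P f (x) = x f'(x) - f(x)` and the dilated energy
`T f (s) = e^s f(e^{-s})` satisfy `(T f)' = -T (P f)`. Hence `T f` is nonincreasing when
`P f ≥ 0` and convex when `P (P f) ≥ 0`, and these two inequalities are McCann's conditions, since
`P (P f) (x) = x² f''(x) - x f'(x) + f(x)`.

The tangent line of a convex function with limit `0` at `0⁺` lies below that limit at `0`, so
`P ψ ≥ 0`. The same remark applies to `P ψ`: convexity of `ψ` forces `P ψ (0⁺) = 0`, and `P ψ` is
convex because its derivative `x ψ''(x) = x / h(x)` is nondecreasing, a positive concave `h` having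
`h(x) / x` nonincreasing.
-/

open Filter Topology

/-- The thermodynamic pressure `x f'(x) - f(x)` of the internal energy density `f`. It is meaningful
where `f` is differentiable, since `deriv` is `0` elsewhere. -/
noncomputable def pressure (f : ℝ → ℝ) (x : ℝ) : ℝ :=
  x * deriv f x - f x

/-- The internal energy, for the energy density `f`, of a unit mass spread uniformly over a volume
`e^s`: its mass density is `e^{-s}`, whence the total `e^s f(e^{-s})`. -/
noncomputable def dilatedEnergy (f : ℝ → ℝ) (s : ℝ) : ℝ :=
  Real.exp s * f (Real.exp (-s))

section Pressure

variable {f : ℝ → ℝ} {x c : ℝ}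

lemma hasDerivAt_pressure (hf : DifferentiableAt ℝ f x) (hf' : DifferentiableAt ℝ (deriv f) x) :
    HasDerivAt (pressure f) (x * deriv (deriv f) x) x :=
  (((hasDerivAt_id' x).mul hf'.hasDerivAt).sub hf.hasDerivAt).congr_deriv (by ring)

lemma pressure_pressure (hf : DifferentiableAt ℝ f x) (hf' : DifferentiableAt ℝ (deriv f) x) :
    pressure (pressure f) x = x ^ 2 * deriv (deriv f) x - x * deriv f x + f x := by
  rw [pressure, (hasDerivAt_pressure hf hf').deriv, pressure]
  ring

lemma convexOn_pressure (hf : DifferentiableOn ℝ f (Ioi 0))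
    (hf' : DifferentiableOn ℝ (deriv f) (Ioi 0))
    (hmono : MonotoneOn (fun x ↦ x * deriv (deriv f) x) (Ioi 0)) :
    ConvexOn ℝ (Ioi 0) (pressure f) := by
  have hderiv (x : ℝ) (hx : x ∈ Ioi 0) : HasDerivAt (pressure f) (x * deriv (deriv f) x) x :=
    hasDerivAt_pressure (hf.differentiableAt (Ioi_mem_nhds hx))
      (hf'.differentiableAt (Ioi_mem_nhds hx))
  refine MonotoneOn.convexOn_of_deriv (convex_Ioi 0) (HasDerivAt.continuousOn hderiv) ?_ ?_ <;>
    rw [interior_Ioi]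
  · exact fun x hx ↦ (hderiv x hx).differentiableAt.differentiableWithinAt
  · exact hmono.congr fun x hx ↦ (hderiv x hx).deriv.symm

lemma neg_le_pressure_of_convexOn (hf : ConvexOn ℝ (Ioi 0) f) (hx : 0 < x)
    (hfx : DifferentiableAt ℝ f x) (h0 : Tendsto f (𝓝[>] 0) (𝓝 c)) : -c ≤ pressure f x := by
  have tangent_le : ∀ᶠ y in 𝓝[>] (0 : ℝ), f x + (y - x) * deriv f x ≤ f y := by
    filter_upwards [Ioo_mem_nhdsGT hx] with y ⟨hy, hyx⟩
    have hslope := hf.slope_le_deriv hy hx hyx hfx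
    rw [slope_def_field, div_le_iff₀ (sub_pos.2 hyx)] at hslope
    linarith
  have tangent_tendsto : Tendsto (fun y ↦ f x + (y - x) * deriv f x) (𝓝[>] 0)
      (𝓝 (f x + (0 - x) * deriv f x)) :=
    ((by fun_prop : Continuous fun y ↦ f x + (y - x) * deriv f x).tendsto 0).mono_left
      nhdsWithin_le_nhds
  have := le_of_tendsto_of_tendsto tangent_tendsto h0 tangent_le
  rw [pressure]
  linarith

lemma pressure_le_of_convexOn (hf : ConvexOn ℝ (Ioi 0) f) (hx : 0 < x)
    (hfx : DifferentiableAt ℝ f x) : pressure f x ≤ f (2 * x) - 2 * f x := by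
  have hslope := hf.deriv_le_slope hx (mem_Ioi.2 (by positivity)) (by linarith : x < 2 * x) hfx
  rw [slope_def_field, le_div_iff₀ (by linarith)] at hslope
  rw [pressure]
  linarith

lemma tendsto_pressure_of_convexOn (hf : ConvexOn ℝ (Ioi 0) f) (hfd : DifferentiableOn ℝ f (Ioi 0))
    (h0 : Tendsto f (𝓝[>] 0) (𝓝 c)) : Tendsto (pressure f) (𝓝[>] 0) (𝓝 (-c)) := by
  have hdouble : Tendsto (fun x : ℝ ↦ 2 * x) (𝓝[>] 0) (𝓝[>] 0) :=
    tendsto_nhdsWithin_iff.2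
      ⟨by simpa using ((continuous_const_mul (2 : ℝ)).tendsto 0).mono_left nhdsWithin_le_nhds,
        by filter_upwards [self_mem_nhdsWithin] with x hx using mul_pos two_pos (mem_Ioi.1 hx)⟩
  have hupper : Tendsto (fun x ↦ f (2 * x) - 2 * f x) (𝓝[>] 0) (𝓝 (-c)) := by
    rw [show -c = c - 2 * c by ring]
    exact (h0.comp hdouble).sub (h0.const_mul 2)
  refine tendsto_of_tendsto_of_tendsto_of_le_of_le' tendsto_const_nhds hupper ?_ ?_ <;>
    filter_upwards [self_mem_nhdsWithin] with x hx
  · exact neg_le_pressure_of_convexOn hf hx (hfd.differentiableAt (Ioi_mem_nhds hx)) h0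
  · exact pressure_le_of_convexOn hf hx (hfd.differentiableAt (Ioi_mem_nhds hx))

end Pressure

section DilatedEnergy

variable {f : ℝ → ℝ}

lemma hasDerivAt_dilatedEnergy {s : ℝ} (hf : DifferentiableAt ℝ f (Real.exp (-s))) :
    HasDerivAt (dilatedEnergy f) (-dilatedEnergy (pressure f) s) s := by
  refine ((Real.hasDerivAt_exp s).mul
    (hf.hasDerivAt.comp s (hasDerivAt_neg s).exp)).congr_deriv ?_
  simp only [dilatedEnergy, pressure, Function.comp_apply]
  ring

lemma antitone_dilatedEnergy (hf : DifferentiableOn ℝ f (Ioi 0))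
    (hpressure : ∀ x ∈ Ioi 0, 0 ≤ pressure f x) : Antitone (dilatedEnergy f) :=
  antitone_of_hasDerivAt_nonpos
    (fun s ↦ hasDerivAt_dilatedEnergy (hf.differentiableAt (Ioi_mem_nhds (Real.exp_pos (-s)))))
    fun s ↦ neg_nonpos.2 (mul_nonneg (Real.exp_pos s).le (hpressure _ (Real.exp_pos (-s))))

lemma convexOn_dilatedEnergy (hf : DifferentiableOn ℝ f (Ioi 0))
    (hf' : DifferentiableOn ℝ (pressure f) (Ioi 0))
    (hpressure : ∀ x ∈ Ioi 0, 0 ≤ pressure (pressure f) x) :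
    ConvexOn ℝ univ (dilatedEnergy f) := by
  have hderiv (s : ℝ) : HasDerivAt (dilatedEnergy f) (-dilatedEnergy (pressure f) s) s :=
    hasDerivAt_dilatedEnergy (hf.differentiableAt (Ioi_mem_nhds (Real.exp_pos (-s))))
  refine Monotone.convexOn_univ_of_deriv (fun s ↦ (hderiv s).differentiableAt) ?_
  rw [deriv_eq hderiv]
  exact (antitone_dilatedEnergy hf' hpressure).neg

end DilatedEnergy

lemma monotoneOn_div_of_concaveOn_pos {h : ℝ → ℝ} (hconc : ConcaveOn ℝ (Ioi 0) h)
    (hpos : ∀ x ∈ Ioi 0, 0 < h x) : MonotoneOn (fun x ↦ x / h x) (Ioi 0) := by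
  intro x hx y hy hxy
  rcases hxy.eq_or_lt with rfl | hxy
  · rfl
  have chord_le : ∀ᶠ z in 𝓝[>] (0 : ℝ), (x - z) * (h y - h x) ≤ (y - x) * h x := by
    filter_upwards [Ioo_mem_nhdsGT hx] with z ⟨hz, hzx⟩
    have hslope := hconc.slope_anti_adjacent hz hy hzx hxy
    rw [div_le_div_iff₀ (sub_pos.2 hxy) (sub_pos.2 hzx)] at hslope
    linarith [mul_pos (sub_pos.2 hxy) (hpos z hz)]
  have chord_tendsto : Tendsto (fun z ↦ (x - z) * (h y - h x)) (𝓝[>] 0)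
      (𝓝 ((x - 0) * (h y - h x))) :=
    ((by fun_prop : Continuous fun z ↦ (x - z) * (h y - h x)).tendsto 0).mono_left
      nhdsWithin_le_nhds
  have := le_of_tendsto chord_tendsto chord_le
  rw [div_le_div_iff₀ (hpos x hx) (hpos y hy)]
  linarith

theorem mccann_conditions_general {ψ : ℝ → ℝ} (hψ : DifferentiableOn ℝ ψ (Ioi 0))
    (hψ' : DifferentiableOn ℝ (deriv ψ) (Ioi 0)) (hψconv : ConvexOn ℝ (Ioi 0) ψ)
    (hmono : MonotoneOn (fun x ↦ x * deriv (deriv ψ) x) (Ioi 0))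
    (hψ0 : Tendsto ψ (𝓝[>] 0) (𝓝 0)) :
    (∀ x ∈ Ioi (0 : ℝ), 0 ≤ x * deriv ψ x - ψ x) ∧
    (∀ x ∈ Ioi (0 : ℝ), 0 ≤ x ^ 2 * deriv (deriv ψ) x - x * deriv ψ x + ψ x) ∧
    ConvexOn ℝ univ (fun s : ℝ => Real.exp s * ψ (Real.exp (-s))) ∧
    Antitone (fun s : ℝ => Real.exp s * ψ (Real.exp (-s))) := by
  have hdψ (x : ℝ) (hx : x ∈ Ioi 0) : DifferentiableAt ℝ ψ x :=
    hψ.differentiableAt (Ioi_mem_nhds hx)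
  have hdψ' (x : ℝ) (hx : x ∈ Ioi 0) : DifferentiableAt ℝ (deriv ψ) x :=
    hψ'.differentiableAt (Ioi_mem_nhds hx)
  have hdP (x : ℝ) (hx : x ∈ Ioi 0) : DifferentiableAt ℝ (pressure ψ) x :=
    (hasDerivAt_pressure (hdψ x hx) (hdψ' x hx)).differentiableAt
  have pressure_nonneg (x : ℝ) (hx : x ∈ Ioi 0) : 0 ≤ pressure ψ x := by
    simpa only [neg_zero] using neg_le_pressure_of_convexOn hψconv hx (hdψ x hx) hψ0
  have pressure_pressure_nonneg (x : ℝ) (hx : x ∈ Ioi 0) : 0 ≤ pressure (pressure ψ) x := by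
    simpa only [neg_zero] using neg_le_pressure_of_convexOn (convexOn_pressure hψ hψ' hmono) hx
      (hdP x hx) (tendsto_pressure_of_convexOn hψconv hψ hψ0)
  exact ⟨pressure_nonneg,
    fun x hx ↦ pressure_pressure (hdψ x hx) (hdψ' x hx) ▸ pressure_pressure_nonneg x hx,
    convexOn_dilatedEnergy hψ (fun x hx ↦ (hdP x hx).differentiableWithinAt)
      pressure_pressure_nonneg,
    antitone_dilatedEnergy hψ pressure_nonneg⟩

/-- If `h : (0,∞) → (0,∞)` is concave and nondecreasing and `ψ` is a `C²`
convex function on `(0,∞)` with `ψ'' = 1/h` and `ψ(0⁺) = 0`, then `ψ` satisfies McCann's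
conditions: `x ψ'(x) − ψ(x) ≥ 0` and `x² ψ''(x) − x ψ'(x) + ψ(x) ≥ 0` for all `x > 0`;
equivalently, the map `s ↦ e^s ψ(e^{−s})` is convex and nonincreasing. -/
theorem mccann_conditions
    (h : ℝ → ℝ) (hconc : ConcaveOn ℝ (Ioi 0) h) (hmono : MonotoneOn h (Ioi 0))
    (hpos : ∀ x ∈ Ioi (0 : ℝ), 0 < h x)
    (ψ : ℝ → ℝ) (hψC2 : ContDiffOn ℝ 2 ψ (Ioi 0))
    (hψ'' : ∀ x ∈ Ioi (0 : ℝ), deriv (deriv ψ) x = 1 / h x)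
    (hψconv : ConvexOn ℝ (Ioi 0) ψ)
    (hψ0 : Filter.Tendsto ψ (nhdsWithin 0 (Ioi 0)) (nhds 0)) :
    (∀ x ∈ Ioi (0 : ℝ), 0 ≤ x * deriv ψ x - ψ x) ∧
    (∀ x ∈ Ioi (0 : ℝ), 0 ≤ x ^ 2 * deriv (deriv ψ) x - x * deriv ψ x + ψ x) ∧
    ConvexOn ℝ univ (fun s : ℝ => Real.exp s * ψ (Real.exp (-s))) ∧
    Antitone (fun s : ℝ => Real.exp s * ψ (Real.exp (-s))) :=
  mccann_conditions_general (hψC2.differentiableOn two_ne_zero)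
    ((hψC2.deriv_of_isOpen isOpen_Ioi one_add_one_eq_two.le).differentiableOn one_ne_zero) hψconv
    ((monotoneOn_div_of_concaveOn_pos hconc hpos).congr fun x hx ↦ by
      simp only [hψ'' x hx, mul_one_div]) hψ0
end

section
/- Let γ be a finite Borel measure on ℝ^d and let h : (0,∞) → (0,∞) be concave and nondecreasing. Let ρ : ℝ^d → (0,∞) and w : ℝ^d → ℝ^d be measurable with ρ ∈ L¹(γ), and let ζ : ℝ^d → [0,∞) be a Borel function with 0 < ∫ ζ² dγ < ∞ and ∫ ζ² ρ dγ < ∞. Then ( ∫_{ℝ^d} ζ |w| dγ )² ≤ ( ∫_{ℝ^d} |w|²/h(ρ) dγ ) · ( ∫ ζ² dγ ) · h( (∫ ζ² ρ dγ) / (∫ ζ² dγ) ). -/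
open Set MeasureTheory ENNReal

/-!
Split `ζ |w| = (|w| / √h(ρ)) · (ζ √h(ρ))` and apply the Cauchy–Schwarz inequality: the first factor
contributes the action and the second one `∫ ζ² h(ρ) dγ`, to which Jensen's inequality for the
finite measure `ζ² γ` applies. Mathlib's version of Jensen's inequality asks for a closed domain;
on an open one both ingredients, that the mean stays in the domain and that the concave function
has a supporting affine function there, come from the Hahn–Banach theorem.
-/

section Jensen

variable {F : Type*} [NormedAddCommGroup F] [NormedSpace ℝ F] {s : Set F} {h : F → ℝ}

theorem exists_forall_le_add_dual_sub_of_concaveOn (hs : IsOpen s) (hconc : ConcaveOn ℝ s h)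
    (hcont : ContinuousOn h s) {m : F} (hm : m ∈ s) :
    ∃ ℓ : StrongDual ℝ F, ∀ y ∈ s, h y ≤ h m + ℓ (y - m) := by
  have hypograph_open : IsOpen {p : F × ℝ | p.1 ∈ s ∧ p.2 < h p.1} := by
    have hgap : ContinuousOn (fun p : F × ℝ => h p.1 - p.2) (Prod.fst ⁻¹' s) :=
      (hcont.comp continuousOn_fst fun _ hp => hp).sub continuousOn_snd
    simpa [preimage, Set.inter_def] using
      hgap.isOpen_inter_preimage (hs.preimage continuous_fst) (isOpen_Ioi (a := 0))
  obtain ⟨L, hL⟩ := geometric_hahn_banach_open_point hconc.convex_strict_hypograph hypograph_open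
    (x := (m, h m)) fun hmem => lt_irrefl _ hmem.2
  have hL_apply (x : F) (t : ℝ) : L (x, t) = L (x, 0) + t * L (0, 1) := by
    rw [← smul_eq_mul, ← map_smul, ← map_add]
    simp
  have hvert : 0 < L (0, 1) := by
    have := hL (m, h m - 1) ⟨hm, sub_one_lt _⟩
    rw [hL_apply, hL_apply m (h m)] at this
    linarith
  refine ⟨-(L (0, 1))⁻¹ • L.comp (ContinuousLinearMap.inl ℝ F ℝ), fun y hy => ?_⟩
  refine le_of_forall_lt fun t ht => ?_
  have := hL (y, t) ⟨hy, ht⟩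
  rw [hL_apply, hL_apply m] at this
  have hsub : L (y - m, 0) = L (y, 0) - L (m, 0) := by simp [← map_sub]
  simp only [smul_apply, ContinuousLinearMap.comp_apply,
    ContinuousLinearMap.inl_apply, smul_eq_mul, hsub]
  field_simp
  linarith

variable {α : Type*} [MeasurableSpace α] {μ : Measure α} {f : α → F} [CompleteSpace F]

theorem average_mem_of_convex_of_isOpen [IsFiniteMeasure μ] [NeZero μ] (hsconv : Convex ℝ s)
    (hs : IsOpen s) (hf : Integrable f μ) (hfs : ∀ᵐ x ∂μ, f x ∈ s) : ⨍ x, f x ∂μ ∈ s := by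
  by_contra hmem
  obtain ⟨ℓ, hℓ⟩ := geometric_hahn_banach_open_point hsconv hs hmem
  obtain ⟨x, hxs, hx⟩ :=
    exists_notMem_null_average_le (NeZero.ne μ) (ℓ.integrable_comp hf) (ae_iff.1 hfs)
  have hcomm : ⨍ a, ℓ (f a) ∂μ = ℓ (⨍ a, f a ∂μ) := ℓ.integral_comp_comm hf.to_average
  exact (hℓ (f x) (not_not.1 hxs)).not_ge (hcomm ▸ hx)

theorem lintegral_ofReal_comp_le_of_concaveOn [IsFiniteMeasure μ] [NeZero μ] (hs : IsOpen s)
    (hconc : ConcaveOn ℝ s h) (hcont : ContinuousOn h s) (hnonneg : ∀ y ∈ s, 0 ≤ h y)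
    (hf : Integrable f μ) (hfs : ∀ᵐ x ∂μ, f x ∈ s) :
    ∫⁻ x, ENNReal.ofReal (h (f x)) ∂μ ≤ μ univ * ENNReal.ofReal (h (⨍ x, f x ∂μ)) := by
  set m := ⨍ x, f x ∂μ
  obtain ⟨ℓ, hℓ⟩ := exists_forall_le_add_dual_sub_of_concaveOn hs hconc hcont
    (average_mem_of_convex_of_isOpen hconc.1 hs hf hfs)
  have hdev : Integrable (fun x => f x - m) μ := hf.sub (integrable_const m)
  have hdev_zero : ∫ x, ℓ (f x - m) ∂μ = 0 := by
    rw [ℓ.integral_comp_comm hdev, integral_sub_average, map_zero]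
  calc
    ∫⁻ x, ENNReal.ofReal (h (f x)) ∂μ ≤ ∫⁻ x, ENNReal.ofReal (h m + ℓ (f x - m)) ∂μ :=
      lintegral_mono_ae <| hfs.mono fun x hx => ENNReal.ofReal_le_ofReal (hℓ _ hx)
    _ = ENNReal.ofReal (∫ x, h m + ℓ (f x - m) ∂μ) :=
      (ofReal_integral_eq_lintegral_ofReal ((integrable_const _).add (ℓ.integrable_comp hdev))
        (hfs.mono fun x hx => (hnonneg _ hx).trans (hℓ _ hx))).symm
    _ = μ univ * ENNReal.ofReal (h m) := by
      rw [integral_add (integrable_const _) (ℓ.integrable_comp hdev), hdev_zero, add_zero,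
        integral_const, smul_eq_mul, ENNReal.ofReal_mul measureReal_nonneg, ofReal_measureReal]

theorem lintegral_ofReal_mul_comp_le_of_concaveOn {θ : α → ℝ} (hs : IsOpen s)
    (hconc : ConcaveOn ℝ s h) (hcont : ContinuousOn h s) (hnonneg : ∀ y ∈ s, 0 ≤ h y)
    (hθ0 : 0 ≤ᵐ[μ] θ) (hθ : Integrable θ μ) (hθpos : 0 < ∫ x, θ x ∂μ)
    (hθf : Integrable (fun x => θ x • f x) μ) (hfs : ∀ᵐ x ∂μ, f x ∈ s) :
    ∫⁻ x, ENNReal.ofReal (θ x) * ENNReal.ofReal (h (f x)) ∂μ ≤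
      ENNReal.ofReal (∫ x, θ x ∂μ) *
        ENNReal.ofReal (h ((∫ x, θ x ∂μ)⁻¹ • ∫ x, θ x • f x ∂μ)) := by
  set ν := μ.withDensity fun x => ENNReal.ofReal (θ x)
  have hθm : AEMeasurable (fun x => ENNReal.ofReal (θ x)) μ := hθ.aemeasurable.ennreal_ofReal
  have hθtop : ∀ᵐ x ∂μ, ENNReal.ofReal (θ x) < ∞ := ae_of_all _ fun _ => ofReal_lt_top
  have hsmul : (fun x => (ENNReal.ofReal (θ x)).toReal • f x) =ᵐ[μ] fun x => θ x • f x :=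
    hθ0.mono fun x hx => by simp only [toReal_ofReal hx]
  have hν_univ : ν univ = ENNReal.ofReal (∫ x, θ x ∂μ) := by
    rw [withDensity_apply _ .univ, setLIntegral_univ, ofReal_integral_eq_lintegral_ofReal hθ hθ0]
  have : IsFiniteMeasure ν := isFiniteMeasure_withDensity_ofReal hθ.2
  have : NeZero ν := ⟨fun h0 => by simp [h0, hθpos.not_ge, eq_comm] at hν_univ⟩
  have hν_average : ⨍ x, f x ∂ν = (∫ x, θ x ∂μ)⁻¹ • ∫ x, θ x • f x ∂μ := by
    rw [average_eq, measureReal_def, hν_univ, toReal_ofReal hθpos.le,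
      integral_withDensity_eq_integral_toReal_smul₀ hθm hθtop, integral_congr_ae hsmul]
  have hfν : Integrable f ν :=
    (integrable_withDensity_iff_integrable_smul₀' hθm hθtop).2 (hθf.congr hsmul.symm)
  calc
    ∫⁻ x, ENNReal.ofReal (θ x) * ENNReal.ofReal (h (f x)) ∂μ
      = ∫⁻ x, ENNReal.ofReal (h (f x)) ∂ν :=
      (lintegral_withDensity_eq_lintegral_mul_non_measurable₀ μ hθm hθtop _).symm
    _ ≤ ν univ * ENNReal.ofReal (h (⨍ x, f x ∂ν)) :=
      lintegral_ofReal_comp_le_of_concaveOn hs hconc hcont hnonneg hfν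
        (withDensity_absolutelyContinuous μ _ hfs)
    _ = _ := by rw [hν_univ, hν_average]

end Jensen

theorem sq_lintegral_mul_le_lintegral_sq_div_mul {α : Type*} [MeasurableSpace α] {μ : Measure α}
    {f g k : α → ℝ≥0∞} (hf : AEMeasurable f μ) (hg : AEMeasurable g μ) (hk : AEMeasurable k μ)
    (hk0 : ∀ᵐ x ∂μ, k x ≠ 0) (hktop : ∀ᵐ x ∂μ, k x ≠ ∞) :
    (∫⁻ x, f x * g x ∂μ) ^ 2 ≤ (∫⁻ x, f x ^ 2 / k x ∂μ) * ∫⁻ x, g x ^ 2 * k x ∂μ := by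
  have rpow_half_sq (t : ℝ≥0∞) : (t ^ (1 / 2 : ℝ)) ^ 2 = t := by
    rw [← ENNReal.rpow_two, ← ENNReal.rpow_mul]
    norm_num
  have hsplit : ∀ᵐ x ∂μ, f x * g x = f x / k x ^ (1 / 2 : ℝ) * (g x * k x ^ (1 / 2 : ℝ)) := by
    filter_upwards [hk0, hktop] with x hx0 hxtop
    rw [mul_comm (g x), ← mul_assoc, ENNReal.div_mul_cancel (by simp [hx0, hxtop])
      (by simp [hx0, hxtop])]
  have hholder := ENNReal.lintegral_mul_le_Lp_mul_Lq μ Real.HolderConjugate.two_two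
    (hf.div (hk.pow_const (1 / 2 : ℝ))) (hg.mul (hk.pow_const (1 / 2 : ℝ)))
  simp only [Pi.mul_apply, Pi.div_apply, ENNReal.div_rpow_of_nonneg _ _ zero_le_two,
    ENNReal.mul_rpow_of_nonneg _ _ zero_le_two, ENNReal.rpow_two, rpow_half_sq] at hholder
  calc
    (∫⁻ x, f x * g x ∂μ) ^ 2
      ≤ ((∫⁻ x, f x ^ 2 / k x ∂μ) ^ (1 / 2 : ℝ) * (∫⁻ x, g x ^ 2 * k x ∂μ) ^ (1 / 2 : ℝ)) ^ 2 := by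
      rw [lintegral_congr_ae hsplit]
      gcongr
    _ = _ := by rw [mul_pow, rpow_half_sq, rpow_half_sq]

theorem aemeasurable_comp_of_continuousOn {α F G : Type*} [MeasurableSpace α] {μ : Measure α}
    [TopologicalSpace F] [MeasurableSpace F] [OpensMeasurableSpace F]
    [TopologicalSpace G] [MeasurableSpace G] [BorelSpace G]
    {s : Set F} {h : F → G} {f : α → F} (hcont : ContinuousOn h s) (hs : MeasurableSet s)
    (hf : AEMeasurable f μ) (hfs : ∀ᵐ x ∂μ, f x ∈ s) : AEMeasurable (fun x => h (f x)) μ := by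
  have : AEMeasurable h (μ.map f) := by
    rw [← Measure.restrict_eq_self_of_ae_mem ((ae_map_iff hf hs).2 hfs)]
    exact hcont.aemeasurable hs
  exact this.comp_aemeasurable hf

theorem equi_integrability_estimate_general {α E F : Type*} [MeasurableSpace α]
    [NormedAddCommGroup E] [NormedAddCommGroup F] [NormedSpace ℝ F] [CompleteSpace F]
    {γ : Measure α} {s : Set F} {h : F → ℝ} {ρ : α → F} {w : α → E} {ζ : α → ℝ}
    (hs : IsOpen s) (hconc : ConcaveOn ℝ s h) (hcont : ContinuousOn h s) (hpos : ∀ y ∈ s, 0 < h y)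
    (hρm : AEStronglyMeasurable ρ γ) (hwm : AEStronglyMeasurable w γ) (hζm : AEMeasurable ζ γ)
    (hρs : ∀ᵐ x ∂γ, ρ x ∈ s) (hζ2int : Integrable (fun x => ζ x ^ 2) γ)
    (hζ2pos : 0 < ∫ x, ζ x ^ 2 ∂γ) (hζ2ρint : Integrable (fun x => ζ x ^ 2 • ρ x) γ) :
    (∫⁻ x, ‖ζ x‖ₑ * ‖w x‖ₑ ∂γ) ^ 2 ≤
      (∫⁻ x, ENNReal.ofReal (‖w x‖ ^ 2 / h (ρ x)) ∂γ) *
        ENNReal.ofReal (∫ x, ζ x ^ 2 ∂γ) *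
        ENNReal.ofReal (h ((∫ x, ζ x ^ 2 ∂γ)⁻¹ • ∫ x, ζ x ^ 2 • ρ x ∂γ)) := by
  borelize F
  have hhρm : AEMeasurable (fun x => ENNReal.ofReal (h (ρ x))) γ :=
    (aemeasurable_comp_of_continuousOn hcont hs.measurableSet hρm.aemeasurable hρs).ennreal_ofReal
  have haction : ∫⁻ x, ‖w x‖ₑ ^ 2 / ENNReal.ofReal (h (ρ x)) ∂γ =
      ∫⁻ x, ENNReal.ofReal (‖w x‖ ^ 2 / h (ρ x)) ∂γ :=
    lintegral_congr_ae <| hρs.mono fun x hx => by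
      simp only [ENNReal.ofReal_div_of_pos (hpos _ hx), ENNReal.ofReal_pow (norm_nonneg _),
        ofReal_norm]
  have hweight (x : α) : ‖ζ x‖ₑ ^ 2 = ENNReal.ofReal (ζ x ^ 2) := by
    rw [← enorm_pow, Real.enorm_of_nonneg (sq_nonneg _)]
  calc
    (∫⁻ x, ‖ζ x‖ₑ * ‖w x‖ₑ ∂γ) ^ 2
      ≤ (∫⁻ x, ‖w x‖ₑ ^ 2 / ENNReal.ofReal (h (ρ x)) ∂γ) *
          ∫⁻ x, ‖ζ x‖ₑ ^ 2 * ENNReal.ofReal (h (ρ x)) ∂γ := by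
      simp only [mul_comm ‖ζ _‖ₑ ‖w _‖ₑ]
      exact sq_lintegral_mul_le_lintegral_sq_div_mul hwm.enorm hζm.enorm hhρm
        (hρs.mono fun x hx => (ofReal_pos.2 (hpos _ hx)).ne') (ae_of_all _ fun _ => ofReal_ne_top)
    _ ≤ _ := by
      simp only [haction, hweight, mul_assoc]
      gcongr
      exact lintegral_ofReal_mul_comp_le_of_concaveOn hs hconc hcont (fun y hy => (hpos y hy).le)
        (ae_of_all _ fun _ => sq_nonneg _) hζ2int hζ2pos hζ2ρint hρs

/-- Equi-integrability estimate: for a finite measure `γ`, a concave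
nondecreasing weight `h`, a positive density `ρ` and a weight function `ζ` with
`0 < ∫ ζ² dγ < ∞` and `∫ ζ² ρ dγ < ∞`, one has
`(∫ ζ |w| dγ)² ≤ (∫ |w|²/h(ρ) dγ) · (∫ ζ² dγ) · h((∫ ζ² ρ dγ)/(∫ ζ² dγ))`. -/
theorem equi_integrability_estimate
    (d : ℕ) (γ : Measure (EuclideanSpace ℝ (Fin d))) [IsFiniteMeasure γ]
    (h : ℝ → ℝ) (hconc : ConcaveOn ℝ (Ioi 0) h) (hmono : MonotoneOn h (Ioi 0))
    (hpos : ∀ x ∈ Ioi (0 : ℝ), 0 < h x)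
    (ρ : EuclideanSpace ℝ (Fin d) → ℝ)
    (w : EuclideanSpace ℝ (Fin d) → EuclideanSpace ℝ (Fin d))
    (ζ : EuclideanSpace ℝ (Fin d) → ℝ)
    (hρm : Measurable ρ) (hwm : Measurable w) (hζm : Measurable ζ)
    (hρpos : ∀ x, 0 < ρ x) (hζ0 : ∀ x, 0 ≤ ζ x)
    (hρint : Integrable ρ γ)
    (hζ2int : Integrable (fun x => ζ x ^ 2) γ)
    (hζ2pos : 0 < ∫ x, ζ x ^ 2 ∂γ)
    (hζ2ρint : Integrable (fun x => ζ x ^ 2 * ρ x) γ) :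
    (∫⁻ x, ENNReal.ofReal (ζ x * ‖w x‖) ∂γ) ^ 2 ≤
      (∫⁻ x, ENNReal.ofReal (‖w x‖ ^ 2 / h (ρ x)) ∂γ) *
        ENNReal.ofReal (∫ x, ζ x ^ 2 ∂γ) *
        ENNReal.ofReal (h ((∫ x, ζ x ^ 2 * ρ x ∂γ) / (∫ x, ζ x ^ 2 ∂γ))) := by
  simpa [ENNReal.ofReal_mul (hζ0 _), Real.enorm_of_nonneg (hζ0 _), ofReal_norm,
    div_eq_inv_mul] using
    equi_integrability_estimate_general isOpen_Ioi hconc (hconc.continuousOn isOpen_Ioi) hpos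
      hρm.aestronglyMeasurable hwm.aestronglyMeasurable hζm.aemeasurable (ae_of_all γ hρpos)
      hζ2int hζ2pos hζ2ρint
end

section
/- Let γ be a finite Borel measure on ℝ^d and let h : [0,∞) → [0,∞) be continuous, concave, nondecreasing and positive on (0,∞). Let (ρ_n) and ρ be nonnegative functions in L¹(γ), and (w_n) and w functions in L¹(γ;ℝ^d), and assume that for every bounded continuous function f : ℝ^d → ℝ one has ∫ f ρ_n dγ → ∫ f ρ dγ and ∫ f w_n dγ → ∫ f w dγ (componentwise) as n → ∞. Then liminf_{n→∞} ∫_{ℝ^d} φ(ρ_n, w_n) dγ ≥ ∫_{ℝ^d} φ(ρ, w) dγ. -/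
open Set MeasureTheory ENNReal Filter

/-- The (extended-real-valued) action density `φ(r, v) = ‖v‖² / h(r)`, with the conventions
`φ(r, 0) = 0` and `φ(r, v) = +∞` when `h(r) = 0` and `v ≠ 0` (recall that in `ℝ≥0∞` one has
`a / 0 = ∞` for `a ≠ 0` and `0 / 0 = 0`). -/
noncomputable def actionDensityE (h : ℝ → ℝ) {E : Type*} [NormedAddCommGroup E]
    (r : ℝ) (v : E) : ℝ≥0∞ :=
  ENNReal.ofReal (‖v‖ ^ 2) / ENNReal.ofReal (h r)

/-!
The action density `φ(r, v) = ‖v‖² / h(r)` is a supremum of affine functions: by Young's inequality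
`2⟪q, v⟫ - ‖q‖² h(s) ≤ φ(s, v)` for every `q`, and concavity bounds `h(s)` above by an affine
function of `s`. Choosing such a minorant continuously in a base point `p` and evaluating it at
`p = g(x)`, with `g` continuous and compactly supported, gives an integrand that is affine in
`(ρₙ, wₙ)` with admissible test fields as coefficients, so its integral passes to the limit.
Letting `g → (ρ, w)` by dominated convergence, the lower limit of the actions bounds the integral
of the minorants based at `(ρ, w)` itself. Those fall short of `φ(ρ, w)` only by a regularization at
scale `δ`, which Fatou's lemma removes as `δ → 0`.
-/

open scoped Topology RealInnerProductSpace

section VagueConvergence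

variable {X ι V V₁ V₂ κ : Type*} [TopologicalSpace X] [MeasurableSpace X] {γ : Measure X}
  {l : Filter ι}
  [NormedAddCommGroup V] [InnerProductSpace ℝ V]
  [NormedAddCommGroup V₁] [InnerProductSpace ℝ V₁]
  [NormedAddCommGroup V₂] [InnerProductSpace ℝ V₂]

/-- Vague convergence of the vector measures `us i · γ` to `u · γ` along `l`: convergence of the
integrals against all compactly supported continuous vector fields. -/
def TendstoVaguely (γ : Measure X) (l : Filter ι) (us : ι → X → V) (u : X → V) : Prop :=
  ∀ f : X → V, Continuous f → HasCompactSupport f →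
    Tendsto (fun i => ∫ x, ⟪f x, us i x⟫ ∂γ) l (𝓝 (∫ x, ⟪f x, u x⟫ ∂γ))

lemma integrable_inner_of_hasCompactSupport [OpensMeasurableSpace X] {f u : X → V}
    (hf : Continuous f) (hfc : HasCompactSupport f) (hu : Integrable u γ) :
    Integrable (fun x => ⟪f x, u x⟫) γ :=
  memLp_one_iff_integrable.1 <| (innerSL ℝ).memLp_of_bilin 1
    (hf.memLp_top_of_hasCompactSupport hfc γ) (memLp_one_iff_integrable.2 hu)

namespace TendstoVaguely

lemma of_bounded_continuous {us : ι → X → ℝ} {u : X → ℝ}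
    (h : ∀ f : X → ℝ, Continuous f → (∃ C, ∀ x, |f x| ≤ C) →
      Tendsto (fun i => ∫ x, f x * us i x ∂γ) l (𝓝 (∫ x, f x * u x ∂γ))) :
    TendstoVaguely γ l us u := fun f hf hfc => by
  simpa only [Real.inner_apply] using h f hf (hfc.exists_bound_of_continuous hf)

lemma toLp_prodMk [OpensMeasurableSpace X] {us : ι → X → V₁} {u : X → V₁} {ws : ι → X → V₂}
    {w : X → V₂} (hus : ∀ i, Integrable (us i) γ) (hu : Integrable u γ)
    (hws : ∀ i, Integrable (ws i) γ) (hw : Integrable w γ)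
    (h₁ : TendstoVaguely γ l us u) (h₂ : TendstoVaguely γ l ws w) :
    TendstoVaguely γ l (fun i x => WithLp.toLp 2 (us i x, ws i x))
      (fun x => WithLp.toLp 2 (u x, w x)) := fun f hf hfc => by
  have hf₁ : Continuous fun x => (f x).fst := by fun_prop
  have hf₂ : Continuous fun x => (f x).snd := by fun_prop
  have hfc₁ : HasCompactSupport fun x => (f x).fst := hfc.comp_left (g := WithLp.fst) rfl
  have hfc₂ : HasCompactSupport fun x => (f x).snd := hfc.comp_left (g := WithLp.snd) rfl
  have integral_eq {r : X → V₁} {v : X → V₂} (hr : Integrable r γ) (hv : Integrable v γ) :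
      ∫ x, ⟪f x, WithLp.toLp 2 (r x, v x)⟫ ∂γ
        = ∫ x, ⟪(f x).fst, r x⟫ ∂γ + ∫ x, ⟪(f x).snd, v x⟫ ∂γ :=
    integral_add (integrable_inner_of_hasCompactSupport hf₁ hfc₁ hr)
      (integrable_inner_of_hasCompactSupport hf₂ hfc₂ hv)
  simpa only [integral_eq hu hw, fun i => integral_eq (hus i) (hws i)] using
    (h₁ _ hf₁ hfc₁).add (h₂ _ hf₂ hfc₂)

lemma of_coord [OpensMeasurableSpace X] [Fintype κ] {us : ι → X → EuclideanSpace ℝ κ}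
    {u : X → EuclideanSpace ℝ κ} (hus : ∀ i, Integrable (us i) γ) (hu : Integrable u γ)
    (h : ∀ j, TendstoVaguely γ l (fun i x => us i x j) (fun x => u x j)) :
    TendstoVaguely γ l us u := fun f hf hfc => by
  have hfj (j : κ) : Continuous fun x => f x j := by fun_prop
  have hfcj (j : κ) : HasCompactSupport fun x => f x j :=
    hfc.comp_left (g := fun v : EuclideanSpace ℝ κ => v j) rfl
  have integral_eq {v : X → EuclideanSpace ℝ κ} (hv : Integrable v γ) :
      ∫ x, ⟪f x, v x⟫ ∂γ = ∑ j, ∫ x, ⟪f x j, v x j⟫ ∂γ := by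
    simp only [PiLp.inner_apply]
    exact integral_finsetSum _ fun j _ =>
      integrable_inner_of_hasCompactSupport (hfj j) (hfcj j) (hv.eval_piLp j)
  simpa only [integral_eq hu, fun i => integral_eq (hus i)] using
    tendsto_finsetSum Finset.univ fun j _ => h j _ (hfj j) (hfcj j)

end TendstoVaguely

end VagueConvergence

section IntegralFunctionals

variable {X ι κ V : Type*} [MeasurableSpace X] {γ : Measure X} {l : Filter ι}
  [NormedAddCommGroup V]

lemma ofReal_integral_le_lintegral_ofReal {f : X → ℝ} (hf : Integrable f γ) :
    ENNReal.ofReal (∫ x, f x ∂γ) ≤ ∫⁻ x, ENNReal.ofReal (f x) ∂γ := by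
  rw [integral_eq_lintegral_pos_part_sub_lintegral_neg_part hf]
  exact (ENNReal.ofReal_le_ofReal (sub_le_self _ ENNReal.toReal_nonneg)).trans
    ENNReal.ofReal_toReal_le

lemma exists_hasCompactSupport_dominated_tendsto_ae [NormedSpace ℝ V] [TopologicalSpace X]
    [NormalSpace X] [R1Space X] [WeaklyLocallyCompactSpace X] [BorelSpace X] [γ.Regular]
    {u : X → V} (hu : Integrable u γ) :
    ∃ (g : ℕ → X → V) (G : X → ℝ), (∀ k, Continuous (g k)) ∧ (∀ k, HasCompactSupport (g k)) ∧
      Integrable G γ ∧ (∀ k, ∀ᵐ x ∂γ, ‖g k x‖ ≤ G x) ∧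
      ∀ᵐ x ∂γ, Tendsto (fun k => g k x) atTop (𝓝 (u x)) := by
  choose g hgc hgu hg hgi using fun k : ℕ => hu.exists_hasCompactSupport_lintegral_sub_le
    (pow_ne_zero k (ENNReal.inv_ne_zero.2 ENNReal.ofNat_ne_top) : (2⁻¹ : ℝ≥0∞) ^ k ≠ 0)
  let S : X → ℝ≥0∞ := fun x => ∑' k, ‖u x - g k x‖ₑ
  have hmeas (k : ℕ) : AEMeasurable (fun x => ‖u x - g k x‖ₑ) γ := (hu.sub (hgi k)).1.enorm
  have hS_meas : AEMeasurable S γ := AEMeasurable.tsum hmeas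
  have hS_int : ∫⁻ x, S x ∂γ ≠ ∞ := by
    refine ne_top_of_le_ne_top ?_ ((lintegral_tsum hmeas).trans_le (ENNReal.tsum_le_tsum hgu))
    simp
  have hS_fin : ∀ᵐ x ∂γ, S x ≠ ∞ := (ae_lt_top' hS_meas hS_int).mono fun _ hx => hx.ne
  refine ⟨g, fun x => ‖u x‖ + (S x).toReal, hg, hgc,
    hu.norm.add (integrable_toReal_of_lintegral_ne_top hS_meas hS_int), fun k => ?_, ?_⟩
  · filter_upwards [hS_fin] with x hx
    have hdist : ‖u x - g k x‖ ≤ (S x).toReal := by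
      rw [← toReal_enorm]
      exact ENNReal.toReal_mono hx (ENNReal.le_tsum k)
    exact (norm_le_norm_add_norm_sub (u x) (g k x)).trans (by gcongr)
  · filter_upwards [hS_fin] with x hx
    have hzero := ENNReal.tendsto_atTop_zero_of_tsum_ne_top hx
    rw [tendsto_iff_edist_tendsto_0]
    simpa only [edist_comm _ (u x), edist_eq_enorm_sub] using hzero

variable [InnerProductSpace ℝ V] {F : V → ℝ≥0∞} {K : Set V}

/-- A field of affine minorants of `F` on `K`: every base point `p` of `V` carries an affine
function `v ↦ ⟪slope p, v⟫ - offset p` whose positive part lies below `F` on `K`, which depends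
continuously on `p` and grows at most linearly in `p` and `v`. Base points outside `K` are allowed
because continuous approximations of a `K`-valued map need not take values in `K`. -/
structure AffineMinorantField (F : V → ℝ≥0∞) (K : Set V) where
  slope : V → V
  offset : V → ℝ
  continuous_slope : Continuous slope
  continuous_offset : Continuous offset
  slope_zero : slope 0 = 0
  exists_abs_le : ∃ C, ∀ p v, |⟪slope p, v⟫ - offset p| ≤ C * (‖p‖ + ‖v‖)
  ofReal_le : ∀ p, ∀ v ∈ K, ENNReal.ofReal (⟪slope p, v⟫ - offset p) ≤ F v
  self_nonneg : ∀ p ∈ K, 0 ≤ ⟪slope p, p⟫ - offset p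

namespace AffineMinorantField

/-- The affine function `v ↦ ⟪slope p, v⟫ - offset p` at the base point `p`. -/
def minorant (φ : AffineMinorantField F K) (p v : V) : ℝ :=
  ⟪φ.slope p, v⟫ - φ.offset p

variable (φ : AffineMinorantField F K)

lemma offset_zero : φ.offset 0 = 0 := by
  obtain ⟨C, hC⟩ := φ.exists_abs_le
  simpa using hC 0 0

lemma aestronglyMeasurable_minorant {g u : X → V} (hg : AEStronglyMeasurable g γ)
    (hu : AEStronglyMeasurable u γ) :
    AEStronglyMeasurable (fun x => φ.minorant (g x) (u x)) γ :=
  ((φ.continuous_slope.comp_aestronglyMeasurable hg).inner hu).sub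
    (φ.continuous_offset.comp_aestronglyMeasurable hg)

lemma integrable_minorant {g u : X → V} (hg : Integrable g γ) (hu : Integrable u γ) :
    Integrable (fun x => φ.minorant (g x) (u x)) γ := by
  obtain ⟨C, hC⟩ := φ.exists_abs_le
  exact ((hg.norm.add hu.norm).const_mul C).mono' (φ.aestronglyMeasurable_minorant hg.1 hu.1)
    (Eventually.of_forall fun x => hC (g x) (u x))

variable [TopologicalSpace X] {us : ι → X → V} {u g : X → V}

lemma tendsto_integral_minorant [OpensMeasurableSpace X] [IsFiniteMeasureOnCompacts γ]
    (hg : Continuous g) (hgc : HasCompactSupport g)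
    (hus : ∀ i, Integrable (us i) γ) (hu : Integrable u γ) (hconv : TendstoVaguely γ l us u) :
    Tendsto (fun i => ∫ x, φ.minorant (g x) (us i x) ∂γ) l
      (𝓝 (∫ x, φ.minorant (g x) (u x) ∂γ)) := by
  have hslope : Continuous fun x => φ.slope (g x) := φ.continuous_slope.comp hg
  have hslopec : HasCompactSupport fun x => φ.slope (g x) := hgc.comp_left φ.slope_zero
  have hoffset : Integrable (fun x => φ.offset (g x)) γ :=
    (φ.continuous_offset.comp hg).integrable_of_hasCompactSupport (hgc.comp_left φ.offset_zero)
  have integral_eq {v : X → V} (hv : Integrable v γ) : ∫ x, φ.minorant (g x) (v x) ∂γ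
      = ∫ x, ⟪φ.slope (g x), v x⟫ ∂γ - ∫ x, φ.offset (g x) ∂γ :=
    integral_sub (integrable_inner_of_hasCompactSupport hslope hslopec hv) hoffset
  simpa only [integral_eq hu, fun i => integral_eq (hus i)] using
    (hconv _ hslope hslopec).sub_const _

lemma ofReal_integral_minorant_le_liminf [OpensMeasurableSpace X] [IsFiniteMeasureOnCompacts γ]
    [l.NeBot] (hg : Continuous g) (hgc : HasCompactSupport g)
    (hus : ∀ i, Integrable (us i) γ) (hu : Integrable u γ) (hconv : TendstoVaguely γ l us u)
    (husK : ∀ i, ∀ᵐ x ∂γ, us i x ∈ K) :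
    ENNReal.ofReal (∫ x, φ.minorant (g x) (u x) ∂γ) ≤ liminf (fun i => ∫⁻ x, F (us i x) ∂γ) l := by
  rw [← (ENNReal.tendsto_ofReal
    (φ.tendsto_integral_minorant hg hgc hus hu hconv)).liminf_eq]
  refine liminf_le_liminf (Eventually.of_forall fun i => ?_)
  calc ENNReal.ofReal (∫ x, φ.minorant (g x) (us i x) ∂γ)
      ≤ ∫⁻ x, ENNReal.ofReal (φ.minorant (g x) (us i x)) ∂γ :=
        ofReal_integral_le_lintegral_ofReal (φ.integrable_minorant
          (hg.integrable_of_hasCompactSupport hgc) (hus i))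
    _ ≤ ∫⁻ x, F (us i x) ∂γ :=
        lintegral_mono_ae ((husK i).mono fun x hx => φ.ofReal_le (g x) _ hx)

variable [NormalSpace X] [R1Space X] [WeaklyLocallyCompactSpace X] [BorelSpace X] [γ.Regular]

lemma lintegral_minorant_self_le_liminf [l.NeBot]
    (hus : ∀ i, Integrable (us i) γ) (hu : Integrable u γ) (hconv : TendstoVaguely γ l us u)
    (husK : ∀ i, ∀ᵐ x ∂γ, us i x ∈ K) (huK : ∀ᵐ x ∂γ, u x ∈ K) :
    ∫⁻ x, ENNReal.ofReal (φ.minorant (u x) (u x)) ∂γ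
      ≤ liminf (fun i => ∫⁻ x, F (us i x) ∂γ) l := by
  obtain ⟨g, G, hg, hgc, hG, hgG, hgu⟩ := exists_hasCompactSupport_dominated_tendsto_ae hu
  obtain ⟨C, hC⟩ := φ.exists_abs_le
  have hlim : Tendsto (fun k => ∫ x, φ.minorant (g k x) (u x) ∂γ) atTop
      (𝓝 (∫ x, φ.minorant (u x) (u x) ∂γ)) := by
    refine tendsto_integral_of_dominated_convergence (fun x => |C| * (G x + ‖u x‖))
      (fun k => φ.aestronglyMeasurable_minorant
        ((hg k).integrable_of_hasCompactSupport (hgc k)).1 hu.1)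
      ((hG.add hu.norm).const_mul _) (fun k => ?_) ?_
    · filter_upwards [hgG k] with x hx
      exact (hC _ _).trans (by gcongr; exact le_abs_self C)
    · filter_upwards [hgu] with x hx
      have hcont : Continuous fun p => φ.minorant p (u x) :=
        (φ.continuous_slope.inner continuous_const).sub φ.continuous_offset
      exact (hcont.tendsto (u x)).comp hx
  rw [← ofReal_integral_eq_lintegral_ofReal (φ.integrable_minorant hu hu)
    (huK.mono fun x hx => φ.self_nonneg _ hx)]
  exact le_of_tendsto (ENNReal.tendsto_ofReal hlim) (Eventually.of_forall fun k =>
    φ.ofReal_integral_minorant_le_liminf (hg k) (hgc k) hus hu hconv husK)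

theorem lintegral_le_liminf {m : Filter κ} [m.NeBot] [m.IsCountablyGenerated] [l.NeBot]
    (φ : κ → AffineMinorantField F K)
    (hφ : ∀ p ∈ K, Tendsto (fun k => ENNReal.ofReal ((φ k).minorant p p)) m (𝓝 (F p)))
    (hus : ∀ i, Integrable (us i) γ) (hu : Integrable u γ) (hconv : TendstoVaguely γ l us u)
    (husK : ∀ i, ∀ᵐ x ∂γ, us i x ∈ K) (huK : ∀ᵐ x ∂γ, u x ∈ K) :
    ∫⁻ x, F (u x) ∂γ ≤ liminf (fun i => ∫⁻ x, F (us i x) ∂γ) l :=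
  calc ∫⁻ x, F (u x) ∂γ
      = ∫⁻ x, liminf (fun k => ENNReal.ofReal ((φ k).minorant (u x) (u x))) m ∂γ :=
        lintegral_congr_ae (huK.mono fun x hx => (hφ _ hx).liminf_eq.symm)
    _ ≤ liminf (fun k => ∫⁻ x, ENNReal.ofReal ((φ k).minorant (u x) (u x)) ∂γ) m :=
        lintegral_liminf_le' fun k =>
          ((φ k).integrable_minorant hu hu).1.aemeasurable.ennreal_ofReal
    _ ≤ liminf (fun _ : κ => liminf (fun i => ∫⁻ x, F (us i x) ∂γ) l) m :=
        liminf_le_liminf (Eventually.of_forall fun k =>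
          (φ k).lintegral_minorant_self_le_liminf hus hu hconv husK huK)
    _ = liminf (fun i => ∫⁻ x, F (us i x) ∂γ) l := liminf_const _

end AffineMinorantField

end IntegralFunctionals

section Mobility

/-- A mobility function: the weight `h` in the action density `‖w‖² / h(ρ)`. -/
structure IsMobility (h : ℝ → ℝ) : Prop where
  continuousOn : ContinuousOn h (Ici 0)
  concaveOn : ConcaveOn ℝ (Ici 0) h
  monotoneOn : MonotoneOn h (Ici 0)
  nonneg : ∀ x ∈ Ici (0 : ℝ), 0 ≤ h x
  pos : ∀ x ∈ Ioi (0 : ℝ), 0 < h x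

/-- The forward difference quotient of `h` at `r` with step `δ`, a continuous substitute for the
derivative of `h`. -/
noncomputable def forwardSlope (h : ℝ → ℝ) (δ r : ℝ) : ℝ :=
  (h (r + δ) - h r) / δ

namespace IsMobility

variable {h : ℝ → ℝ} (hh : IsMobility h) {δ r s : ℝ}
include hh

lemma pos_add (hδ : 0 < δ) (hr : 0 ≤ r) : 0 < h (r + δ) :=
  hh.pos _ (add_pos_of_nonneg_of_pos hr hδ)

lemma continuous_comp_posPart_add (hδ : 0 ≤ δ) : Continuous fun r : ℝ => h (r⁺ + δ) :=
  hh.continuousOn.comp_continuous (continuous_posPart.add continuous_const)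
    fun r => add_nonneg (posPart_nonneg r) hδ

lemma continuous_forwardSlope_posPart (hδ : 0 ≤ δ) : Continuous fun r : ℝ => forwardSlope h δ r⁺ :=
  ((hh.continuous_comp_posPart_add hδ).sub
    (by simpa using hh.continuous_comp_posPart_add le_rfl)).div_const δ

lemma forwardSlope_nonneg (hδ : 0 < δ) (hr : 0 ≤ r) : 0 ≤ forwardSlope h δ r :=
  div_nonneg (sub_nonneg.2 <| hh.monotoneOn hr (add_nonneg hr hδ.le) (by linarith)) hδ.le

lemma mul_forwardSlope_le (hδ : 0 < δ) (hr : 0 ≤ r) : δ * forwardSlope h δ r ≤ h (r + δ) := by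
  rw [forwardSlope, mul_div_cancel₀ _ hδ.ne']
  linarith [hh.nonneg r hr]

-- Off `[r, r + δ]` concavity puts `h` below the secant, and on it `h` is at most `h (r + δ)`;
-- lifting the secant through `(r, h r)` up to `h (r + δ)` covers both cases.
lemma le_add_forwardSlope_mul (hδ : 0 < δ) (hr : 0 ≤ r) (hs : 0 ≤ s) :
    h s ≤ h (r + δ) + forwardSlope h δ r * (s - r) := by
  have hrδ : 0 ≤ r + δ := add_nonneg hr hδ.le
  have hslope : 0 ≤ forwardSlope h δ r := hh.forwardSlope_nonneg hδ hr
  have hslope_mul : forwardSlope h δ r * δ = h (r + δ) - h r := div_mul_cancel₀ _ hδ.ne'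
  have hslope_eq : (h (r + δ) - h r) / (r + δ - r) = forwardSlope h δ r := by
    rw [forwardSlope, add_sub_cancel_left]
  rcases lt_or_ge s r with hsr | hrs
  · have hsecant := hh.concaveOn.slope_anti_adjacent hs hrδ hsr (by linarith)
    rw [hslope_eq, le_div_iff₀ (by linarith)] at hsecant
    nlinarith
  rcases le_or_gt s (r + δ) with hsδ | hδs
  · have hle := hh.monotoneOn hs hrδ hsδ
    nlinarith
  · have hsecant := hh.concaveOn.slope_anti_adjacent hr hs (by linarith) hδs
    rw [hslope_eq, div_le_iff₀ (by linarith)] at hsecant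
    nlinarith

lemma forwardSlope_mul_le (hδ : 0 < δ) (hr : 0 ≤ r) : forwardSlope h δ r * r ≤ h (r + δ) := by
  have hzero := hh.le_add_forwardSlope_mul hδ hr le_rfl
  linarith [hh.nonneg 0 self_mem_Ici]

end IsMobility

variable {E : Type*} [NormedAddCommGroup E] [InnerProductSpace ℝ E]

lemma ofReal_two_mul_inner_sub_le_actionDensityE {h : ℝ → ℝ} {r : ℝ} (hr : 0 ≤ h r) (q v : E) :
    ENNReal.ofReal (2 * ⟪q, v⟫ - ‖q‖ ^ 2 * h r) ≤ actionDensityE h r v := by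
  rcases hr.eq_or_lt with hr | hr
  · by_cases hv : v = 0
    · simp [← hr, hv]
    · simp [actionDensityE, ← hr, ENNReal.div_zero, hv]
  · rw [actionDensityE, ← ENNReal.ofReal_div_of_pos hr]
    apply ENNReal.ofReal_le_ofReal
    rw [le_div_iff₀ hr]
    have hcauchy := mul_le_mul_of_nonneg_right (real_inner_le_norm q v) hr.le
    linarith [sq_nonneg (‖q‖ * h r - ‖v‖)]

/-- A bounded approximation of the velocity `v / h(r)` associated with a density `r` and a
momentum `v`: the shift by `δ` keeps the denominator away from zero, the factor
`(1 + δ‖v‖)⁻¹` compensates the growth in `v`. -/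
noncomputable def regularizedVelocity (h : ℝ → ℝ) (δ r : ℝ) (v : E) : E :=
  ((1 + δ * ‖v‖)⁻¹ * (h (r + δ))⁻¹) • v

/-- The slope at the base point `(r, m)` of an affine minorant of the action density. With `q` the
regularized velocity there, the minorant is Young's lower bound `2⟪q, v⟫ - ‖q‖² h(s)`, in which
`h(s)` is replaced by its affine majorant `h(r + δ) + forwardSlope h δ r * (s - r)`. Passing to
`r⁺` makes it continuous on the whole space. -/
noncomputable def actionMinorantSlope (h : ℝ → ℝ) (δ : ℝ) (p : WithLp 2 (ℝ × E)) :
    WithLp 2 (ℝ × E) :=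
  WithLp.toLp 2 (-(‖regularizedVelocity h δ p.fst⁺ p.snd‖ ^ 2 * forwardSlope h δ p.fst⁺),
    (2 : ℝ) • regularizedVelocity h δ p.fst⁺ p.snd)

/-- The offset of the affine minorant with slope `actionMinorantSlope h δ p`. -/
noncomputable def actionMinorantOffset (h : ℝ → ℝ) (δ : ℝ) (p : WithLp 2 (ℝ × E)) : ℝ :=
  ‖regularizedVelocity h δ p.fst⁺ p.snd‖ ^ 2 * (h (p.fst⁺ + δ) - forwardSlope h δ p.fst⁺ * p.fst⁺)

lemma inner_actionMinorantSlope_sub_offset (h : ℝ → ℝ) (δ : ℝ) (p v : WithLp 2 (ℝ × E)) :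
    ⟪actionMinorantSlope h δ p, v⟫ - actionMinorantOffset h δ p
      = 2 * ⟪regularizedVelocity h δ p.fst⁺ p.snd, v.snd⟫
        - ‖regularizedVelocity h δ p.fst⁺ p.snd‖ ^ 2
          * (h (p.fst⁺ + δ) + forwardSlope h δ p.fst⁺ * (v.fst - p.fst⁺)) := by
  simp only [actionMinorantSlope, actionMinorantOffset, WithLp.prod_inner_apply, WithLp.ofLp_fst,
    WithLp.ofLp_snd, Real.inner_apply, real_inner_smul_left]
  ring

lemma inner_actionMinorantSlope_self_sub_offset (h : ℝ → ℝ) (δ : ℝ) {p : WithLp 2 (ℝ × E)}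
    (hp : 0 ≤ p.fst) : ⟪actionMinorantSlope h δ p, p⟫ - actionMinorantOffset h δ p
      = 2 * ⟪regularizedVelocity h δ p.fst p.snd, p.snd⟫
        - ‖regularizedVelocity h δ p.fst p.snd‖ ^ 2 * h (p.fst + δ) := by
  rw [inner_actionMinorantSlope_sub_offset, posPart_eq_self.2 hp, sub_self, mul_zero, add_zero]

namespace IsMobility

variable {h : ℝ → ℝ} (hh : IsMobility h) {δ r : ℝ}
include hh

lemma continuous_regularizedVelocity (hδ : 0 < δ) :
    Continuous fun p : WithLp 2 (ℝ × E) => regularizedVelocity h δ p.fst⁺ p.snd := by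
  have hdamp : Continuous fun p : WithLp 2 (ℝ × E) => (1 + δ * ‖p.snd‖)⁻¹ :=
    Continuous.inv₀ (by fun_prop) fun p => by positivity
  have hdenom : Continuous fun p : WithLp 2 (ℝ × E) => (h (p.fst⁺ + δ))⁻¹ :=
    ((hh.continuous_comp_posPart_add hδ.le).comp (by fun_prop)).inv₀
      fun p => (hh.pos_add hδ (posPart_nonneg _)).ne'
  exact (hdamp.mul hdenom).smul (by fun_prop)

lemma norm_regularizedVelocity_mul (hδ : 0 < δ) (hr : 0 ≤ r) (v : E) :
    ‖regularizedVelocity h δ r v‖ * h (r + δ) = (1 + δ * ‖v‖)⁻¹ * ‖v‖ := by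
  have hpos := hh.pos_add hδ hr
  rw [regularizedVelocity, norm_smul, Real.norm_of_nonneg (by positivity)]
  field_simp

lemma norm_regularizedVelocity_mul_le_inv (hδ : 0 < δ) (hr : 0 ≤ r) (v : E) :
    ‖regularizedVelocity h δ r v‖ * h (r + δ) ≤ δ⁻¹ := by
  rw [hh.norm_regularizedVelocity_mul hδ hr, inv_mul_le_iff₀ (by positivity), add_mul,
    mul_right_comm, mul_inv_cancel₀ hδ.ne', one_mul, one_mul]
  exact le_add_of_nonneg_left (inv_nonneg.2 hδ.le)

lemma norm_regularizedVelocity_mul_le_norm (hδ : 0 < δ) (hr : 0 ≤ r) (v : E) :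
    ‖regularizedVelocity h δ r v‖ * h (r + δ) ≤ ‖v‖ := by
  rw [hh.norm_regularizedVelocity_mul hδ hr]
  exact mul_le_of_le_one_left (norm_nonneg v)
    (inv_le_one_of_one_le₀ (le_add_of_nonneg_right (by positivity)))

lemma norm_regularizedVelocity_le (hδ : 0 < δ) (hr : 0 ≤ r) (v : E) :
    ‖regularizedVelocity h δ r v‖ ≤ δ⁻¹ * (h δ)⁻¹ := by
  have hmono : h δ ≤ h (r + δ) := hh.monotoneOn hδ.le (add_nonneg hr hδ.le) (by linarith)
  rw [← div_eq_mul_inv, le_div_iff₀ (hh.pos δ hδ)]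
  exact (mul_le_mul_of_nonneg_left hmono (norm_nonneg _)).trans
    (hh.norm_regularizedVelocity_mul_le_inv hδ hr v)

lemma norm_sq_regularizedVelocity_mul_le (hδ : 0 < δ) (hr : 0 ≤ r) (v : E) :
    ‖regularizedVelocity h δ r v‖ ^ 2 * h (r + δ) ≤ δ⁻¹ * (h δ)⁻¹ * ‖v‖ := by
  rw [pow_two, mul_assoc]
  have hpos := hh.pos_add hδ hr
  have hposδ := hh.pos δ hδ
  exact mul_le_mul (hh.norm_regularizedVelocity_le hδ hr v)
    (hh.norm_regularizedVelocity_mul_le_norm hδ hr v) (by positivity) (by positivity)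

lemma norm_sq_regularizedVelocity_mul_forwardSlope_le (hδ : 0 < δ) (hr : 0 ≤ r) (v : E) :
    ‖regularizedVelocity h δ r v‖ ^ 2 * forwardSlope h δ r ≤ δ⁻¹ * (h δ)⁻¹ * (δ⁻¹ * δ⁻¹) := by
  have hpos := hh.pos_add hδ hr
  have hposδ := hh.pos δ hδ
  have hslope : forwardSlope h δ r ≤ δ⁻¹ * h (r + δ) :=
    (le_inv_mul_iff₀ hδ).2 (hh.mul_forwardSlope_le hδ hr)
  calc ‖regularizedVelocity h δ r v‖ ^ 2 * forwardSlope h δ r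
      ≤ ‖regularizedVelocity h δ r v‖ ^ 2 * (δ⁻¹ * h (r + δ)) := by gcongr
    _ = ‖regularizedVelocity h δ r v‖ * (δ⁻¹ * (‖regularizedVelocity h δ r v‖ * h (r + δ))) := by
        ring
    _ ≤ δ⁻¹ * (h δ)⁻¹ * (δ⁻¹ * δ⁻¹) := by
        gcongr
        · exact hh.norm_regularizedVelocity_le hδ hr v
        · exact hh.norm_regularizedVelocity_mul_le_inv hδ hr v

lemma two_mul_inner_regularizedVelocity_sub (hδ : 0 < δ) (hr : 0 ≤ r) (v : E) :
    2 * ⟪regularizedVelocity h δ r v, v⟫ - ‖regularizedVelocity h δ r v‖ ^ 2 * h (r + δ)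
      = (1 + δ * ‖v‖)⁻¹ * (2 - (1 + δ * ‖v‖)⁻¹) * ‖v‖ ^ 2 / h (r + δ) := by
  have hpos := hh.pos_add hδ hr
  have hnorm : ‖regularizedVelocity h δ r v‖ = (1 + δ * ‖v‖)⁻¹ * ‖v‖ / h (r + δ) :=
    eq_div_of_mul_eq hpos.ne' (hh.norm_regularizedVelocity_mul hδ hr v)
  have hinner : ⟪regularizedVelocity h δ r v, v⟫
      = (1 + δ * ‖v‖)⁻¹ * (h (r + δ))⁻¹ * ‖v‖ ^ 2 := by
    rw [regularizedVelocity, real_inner_smul_left, real_inner_self_eq_norm_sq]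
  rw [hnorm, hinner]
  field_simp

lemma two_mul_inner_regularizedVelocity_sub_nonneg (hδ : 0 < δ) (hr : 0 ≤ r) (v : E) :
    0 ≤ 2 * ⟪regularizedVelocity h δ r v, v⟫
      - ‖regularizedVelocity h δ r v‖ ^ 2 * h (r + δ) := by
  have hpos := hh.pos_add hδ hr
  have hdamp : (1 + δ * ‖v‖)⁻¹ ≤ 1 :=
    inv_le_one_of_one_le₀ (le_add_of_nonneg_right (by positivity))
  have hdamp' : 0 ≤ 2 - (1 + δ * ‖v‖)⁻¹ := by linarith
  rw [hh.two_mul_inner_regularizedVelocity_sub hδ hr]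
  positivity

lemma tendsto_two_mul_inner_regularizedVelocity_sub (hr : 0 ≤ r) (v : E) :
    Tendsto (fun δ => ENNReal.ofReal (2 * ⟪regularizedVelocity h δ r v, v⟫
      - ‖regularizedVelocity h δ r v‖ ^ 2 * h (r + δ))) (𝓝[>] 0) (𝓝 (actionDensityE h r v)) := by
  by_cases hv : v = 0
  · simp [hv, actionDensityE, regularizedVelocity]
  have hid : Tendsto (fun δ : ℝ => δ) (𝓝[>] 0) (𝓝 0) := nhdsWithin_le_nhds
  have hdenom : Tendsto (fun δ => h (r + δ)) (𝓝[>] 0) (𝓝 (h r)) := by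
    refine (hh.continuousOn r hr).tendsto.comp (tendsto_nhdsWithin_iff.2 ⟨?_, ?_⟩)
    · simpa using hid.const_add r
    · filter_upwards [self_mem_nhdsWithin] with δ hδ using add_nonneg hr (le_of_lt hδ)
  have hdamp : Tendsto (fun δ : ℝ => (1 + δ * ‖v‖)⁻¹) (𝓝[>] 0) (𝓝 1) := by
    simpa using ((hid.mul_const ‖v‖).const_add 1).inv₀ (by simp)
  have hnum : Tendsto (fun δ : ℝ => (1 + δ * ‖v‖)⁻¹ * (2 - (1 + δ * ‖v‖)⁻¹) * ‖v‖ ^ 2) (𝓝[>] 0)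
      (𝓝 (‖v‖ ^ 2)) := by
    convert (hdamp.mul (hdamp.const_sub 2)).mul_const (‖v‖ ^ 2) using 2
    norm_num
  have hquot := ENNReal.Tendsto.div (ENNReal.tendsto_ofReal hnum) (Or.inl (by simpa using hv))
    (ENNReal.tendsto_ofReal hdenom) (Or.inr ENNReal.ofReal_ne_top)
  refine hquot.congr' ?_
  filter_upwards [self_mem_nhdsWithin] with δ (hδ : 0 < δ)
  rw [hh.two_mul_inner_regularizedVelocity_sub hδ hr, ENNReal.ofReal_div_of_pos (hh.pos_add hδ hr)]

lemma continuous_actionMinorantSlope (hδ : 0 < δ) :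
    Continuous (actionMinorantSlope h δ : WithLp 2 (ℝ × E) → WithLp 2 (ℝ × E)) := by
  have hq := hh.continuous_regularizedVelocity (E := E) hδ
  have hslope : Continuous fun p : WithLp 2 (ℝ × E) => forwardSlope h δ p.fst⁺ :=
    (hh.continuous_forwardSlope_posPart hδ.le).comp (by fun_prop)
  exact (WithLp.prod_continuous_toLp 2 ℝ E).comp
    (((hq.norm.pow 2).mul hslope).neg.prodMk (hq.const_smul (2 : ℝ)))

lemma continuous_actionMinorantOffset (hδ : 0 < δ) :
    Continuous (actionMinorantOffset h δ : WithLp 2 (ℝ × E) → ℝ) := by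
  have hfst : Continuous fun p : WithLp 2 (ℝ × E) => p.fst := by fun_prop
  exact ((hh.continuous_regularizedVelocity hδ).norm.pow 2).mul
    (((hh.continuous_comp_posPart_add hδ.le).comp hfst).sub
      (((hh.continuous_forwardSlope_posPart hδ.le).comp hfst).mul
        (continuous_posPart.comp hfst)))

lemma abs_actionMinorantOffset_le (hδ : 0 < δ) (p : WithLp 2 (ℝ × E)) :
    |actionMinorantOffset h δ p| ≤ δ⁻¹ * (h δ)⁻¹ * ‖p‖ := by
  have hr : 0 ≤ p.fst⁺ := posPart_nonneg _
  have hposδ := hh.pos δ hδ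
  have hslope : 0 ≤ forwardSlope h δ p.fst⁺ * p.fst⁺ := mul_nonneg (hh.forwardSlope_nonneg hδ hr) hr
  rw [actionMinorantOffset,
    abs_of_nonneg (mul_nonneg (sq_nonneg _) (sub_nonneg.2 (hh.forwardSlope_mul_le hδ hr)))]
  calc _ ≤ ‖regularizedVelocity h δ p.fst⁺ p.snd‖ ^ 2 * h (p.fst⁺ + δ) := by
        gcongr
        exact sub_le_self _ hslope
    _ ≤ δ⁻¹ * (h δ)⁻¹ * ‖p.snd‖ := hh.norm_sq_regularizedVelocity_mul_le hδ hr p.snd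
    _ ≤ δ⁻¹ * (h δ)⁻¹ * ‖p‖ := by
        gcongr
        exact WithLp.norm_snd_le _ p

lemma abs_inner_actionMinorantSlope_le (hδ : 0 < δ) (p v : WithLp 2 (ℝ × E)) :
    |⟪actionMinorantSlope h δ p, v⟫| ≤ δ⁻¹ * (h δ)⁻¹ * (δ⁻¹ * δ⁻¹ + 2) * ‖v‖ := by
  have hr : 0 ≤ p.fst⁺ := posPart_nonneg _
  have hposδ := hh.pos δ hδ
  have hslope := hh.forwardSlope_nonneg hδ hr
  have hfst : |⟪(actionMinorantSlope h δ p).fst, v.fst⟫|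
      ≤ δ⁻¹ * (h δ)⁻¹ * (δ⁻¹ * δ⁻¹) * ‖v‖ := by
    refine (abs_real_inner_le_norm _ _).trans ?_
    rw [actionMinorantSlope, WithLp.toLp_fst, norm_neg, Real.norm_of_nonneg (by positivity)]
    exact mul_le_mul (hh.norm_sq_regularizedVelocity_mul_forwardSlope_le hδ hr p.snd)
      (WithLp.norm_fst_le _ v) (norm_nonneg _) (by positivity)
  have hsnd : |⟪(actionMinorantSlope h δ p).snd, v.snd⟫| ≤ δ⁻¹ * (h δ)⁻¹ * 2 * ‖v‖ := by
    refine (abs_real_inner_le_norm _ _).trans ?_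
    rw [actionMinorantSlope, WithLp.toLp_snd, norm_smul, Real.norm_ofNat, mul_comm 2]
    gcongr
    · exact hh.norm_regularizedVelocity_le hδ hr p.snd
    · exact WithLp.norm_snd_le _ v
  rw [WithLp.prod_inner_apply, mul_add, add_mul]
  exact (abs_add_le _ _).trans (add_le_add hfst hsnd)

lemma ofReal_actionMinorant_le (hδ : 0 < δ) (p : WithLp 2 (ℝ × E)) {v : WithLp 2 (ℝ × E)}
    (hv : 0 ≤ v.fst) :
    ENNReal.ofReal (⟪actionMinorantSlope h δ p, v⟫ - actionMinorantOffset h δ p)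
      ≤ actionDensityE h v.fst v.snd := by
  refine le_trans (ENNReal.ofReal_le_ofReal ?_)
    (ofReal_two_mul_inner_sub_le_actionDensityE (hh.nonneg _ hv)
      (regularizedVelocity h δ p.fst⁺ p.snd) v.snd)
  rw [inner_actionMinorantSlope_sub_offset]
  gcongr
  exact hh.le_add_forwardSlope_mul hδ (posPart_nonneg _) hv

/-- The affine minorants of the action density at scale `δ`, on the half-space of nonnegative
densities. -/
noncomputable def actionMinorantField (hδ : 0 < δ) :
    AffineMinorantField (fun p : WithLp 2 (ℝ × E) => actionDensityE h p.fst p.snd)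
      {p | 0 ≤ p.fst} where
  slope := actionMinorantSlope h δ
  offset := actionMinorantOffset h δ
  continuous_slope := hh.continuous_actionMinorantSlope hδ
  continuous_offset := hh.continuous_actionMinorantOffset hδ
  slope_zero := by simp [actionMinorantSlope, regularizedVelocity]
  exists_abs_le := by
    have hposδ := hh.pos δ hδ
    refine ⟨δ⁻¹ * (h δ)⁻¹ * (δ⁻¹ * δ⁻¹ + 2), fun p v => ?_⟩
    have hone : 1 ≤ δ⁻¹ * δ⁻¹ + 2 := by nlinarith [mul_self_nonneg δ⁻¹]
    rw [add_comm ‖p‖, mul_add]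
    refine (abs_sub _ _).trans (add_le_add (hh.abs_inner_actionMinorantSlope_le hδ p v)
      ((hh.abs_actionMinorantOffset_le hδ p).trans ?_))
    exact mul_le_mul_of_nonneg_right (le_mul_of_one_le_right (by positivity) hone) (norm_nonneg p)
  ofReal_le p _ hv := hh.ofReal_actionMinorant_le hδ p hv
  self_nonneg p hp := by
    rw [inner_actionMinorantSlope_self_sub_offset h δ hp]
    exact hh.two_mul_inner_regularizedVelocity_sub_nonneg hδ hp p.snd

lemma tendsto_ofReal_minorant_self {κ : Type*} {m : Filter κ} {δ : κ → ℝ} (hδ : ∀ k, 0 < δ k)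
    (hδm : Tendsto δ m (𝓝 0)) {p : WithLp 2 (ℝ × E)} (hp : 0 ≤ p.fst) :
    Tendsto (fun k => ENNReal.ofReal ((hh.actionMinorantField (hδ k)).minorant p p)) m
      (𝓝 (actionDensityE h p.fst p.snd)) := by
  have hδm' : Tendsto δ m (𝓝[>] 0) := tendsto_nhdsWithin_iff.2 ⟨hδm, Eventually.of_forall hδ⟩
  refine ((hh.tendsto_two_mul_inner_regularizedVelocity_sub hp p.snd).comp hδm').congr fun k => ?_
  exact congrArg ENNReal.ofReal (inner_actionMinorantSlope_self_sub_offset h (δ k) hp).symm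

end IsMobility

end Mobility

theorem action_lower_semicontinuous_general {X ι E : Type*} [TopologicalSpace X] [NormalSpace X]
    [R1Space X] [WeaklyLocallyCompactSpace X] [MeasurableSpace X] [BorelSpace X]
    [NormedAddCommGroup E] [InnerProductSpace ℝ E] {γ : Measure X} [γ.Regular]
    {l : Filter ι} [l.NeBot] {h : ℝ → ℝ} (hh : IsMobility h)
    {ρs : ι → X → ℝ} {ρ : X → ℝ} {ws : ι → X → E} {w : X → E}
    (hρs : ∀ i, Integrable (ρs i) γ) (hρ : Integrable ρ γ)
    (hρs_nonneg : ∀ i, ∀ᵐ x ∂γ, 0 ≤ ρs i x) (hρ_nonneg : ∀ᵐ x ∂γ, 0 ≤ ρ x)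
    (hws : ∀ i, Integrable (ws i) γ) (hw : Integrable w γ)
    (hρ_lim : TendstoVaguely γ l ρs ρ) (hw_lim : TendstoVaguely γ l ws w) :
    ∫⁻ x, actionDensityE h (ρ x) (w x) ∂γ
      ≤ liminf (fun i => ∫⁻ x, actionDensityE h (ρs i x) (ws i x) ∂γ) l :=
  AffineMinorantField.lintegral_le_liminf
    (us := fun i x => WithLp.toLp 2 (ρs i x, ws i x)) (u := fun x => WithLp.toLp 2 (ρ x, w x))
    (fun k : ℕ => hh.actionMinorantField (Nat.one_div_pos_of_nat (n := k)))
    (fun _ hp => hh.tendsto_ofReal_minorant_self _ tendsto_one_div_add_atTop_nhds_zero_nat hp)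
    (fun i => .of_fst_of_snd_prodLp ⟨hρs i, hws i⟩) (.of_fst_of_snd_prodLp ⟨hρ, hw⟩)
    (.toLp_prodMk hρs hρ hws hw hρ_lim hw_lim) hρs_nonneg hρ_nonneg

/-- Lower semicontinuity of the action functional with respect to weak*
convergence of the measures `ρ_n·γ → ρ·γ` and `w_n·γ → w·γ` (tested against bounded
continuous functions, componentwise for the vector parts). -/
theorem action_lower_semicontinuous
    (d : ℕ) (γ : Measure (EuclideanSpace ℝ (Fin d))) [IsFiniteMeasure γ]
    (h : ℝ → ℝ) (hcont : ContinuousOn h (Ici 0)) (hconc : ConcaveOn ℝ (Ici 0) h)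
    (hmono : MonotoneOn h (Ici 0)) (hnonneg : ∀ x ∈ Ici (0 : ℝ), 0 ≤ h x)
    (hpos : ∀ x ∈ Ioi (0 : ℝ), 0 < h x)
    (ρs : ℕ → EuclideanSpace ℝ (Fin d) → ℝ) (ρ : EuclideanSpace ℝ (Fin d) → ℝ)
    (ws : ℕ → EuclideanSpace ℝ (Fin d) → EuclideanSpace ℝ (Fin d))
    (w : EuclideanSpace ℝ (Fin d) → EuclideanSpace ℝ (Fin d))
    (hρsint : ∀ n, Integrable (ρs n) γ) (hρint : Integrable ρ γ)
    (hρs0 : ∀ n x, 0 ≤ ρs n x) (hρ0 : ∀ x, 0 ≤ ρ x)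
    (hwsint : ∀ n, Integrable (ws n) γ) (hwint : Integrable w γ)
    (hweakρ : ∀ f : EuclideanSpace ℝ (Fin d) → ℝ, Continuous f → (∃ C, ∀ x, |f x| ≤ C) →
      Tendsto (fun n => ∫ x, f x * ρs n x ∂γ) atTop (nhds (∫ x, f x * ρ x ∂γ)))
    (hweakw : ∀ f : EuclideanSpace ℝ (Fin d) → ℝ, Continuous f → (∃ C, ∀ x, |f x| ≤ C) →
      ∀ i : Fin d,
        Tendsto (fun n => ∫ x, f x * ws n x i ∂γ) atTop (nhds (∫ x, f x * w x i ∂γ))) :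
    (∫⁻ x, actionDensityE h (ρ x) (w x) ∂γ) ≤
      Filter.liminf (fun n => ∫⁻ x, actionDensityE h (ρs n x) (ws n x) ∂γ) atTop := by
  exact action_lower_semicontinuous_general ⟨hcont, hconc, hmono, hnonneg, hpos⟩ hρsint hρint
    (fun n => .of_forall (hρs0 n)) (.of_forall hρ0) hwsint hwint (.of_bounded_continuous hweakρ)
    (.of_coord hwsint hwint fun i => .of_bounded_continuous fun f hf hb => hweakw f hf hb i)
end

section
/- Let V : ℝ^d → ℝ be C² with bounded second derivatives and ∫ e^{−V} dx < ∞, and let γ be the measure with density e^{−V} with respect to Lebesgue measure. Let h : (0,∞) → (0,∞) be C², concave and nondecreasing, and let ψ : (0,∞) → ℝ be C² with ψ'' = 1/h and ψ(1) = ψ'(1) = 0. Let ρ : [0,∞)×ℝ^d → ℝ be a smooth solution of ∂_t ρ = Δρ − ∇V·∇ρ with 0 < m ≤ ρ ≤ M for constants m, M, and all partial derivatives bounded on [0,T]×ℝ^d for every T > 0. Then the function t ↦ Ψ(ρ_t) := ∫ ψ(ρ(t,x)) dγ(x) is differentiable on (0,∞) and for every t > 0 its derivative equals −P(ρ_t)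 := −∫_{ℝ^d} ψ''(ρ(t,x)) |∇ρ(t,x)|² dγ(x). -/
/-!
The generator `L f = Δf − ∇V·∇f` is symmetric with respect to `γ = e^{−V} dx`: since
`e^{−V} (g L f + ∇g·∇f) = div (e^{−V} g ∇f)`, one has `∫ g L f dγ = −∫ ∇g·∇f dγ`.
Differentiating under the integral sign gives `d/dt ∫ ψ(ρ_t) dγ = ∫ ψ'(ρ_t) L ρ_t dγ`, and the
symmetry with `g = ψ'(ρ_t)`, `∇g = ψ''(ρ_t) ∇ρ_t` turns this into minus the entropy production.

The individual terms `∂_i (e^{−V} g ∂_i f)` contain second derivatives of `f` and derivatives of `V`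
that are not assumed integrable; only their sum is controlled, through `L f`. The divergence is
therefore integrated against cutoff functions whose gradients tend uniformly to zero.
-/

open Set MeasureTheory Filter

/-- Partial derivative `∂_i f` of a scalar function on `ℝᵈ`. -/
noncomputable def pd {d : ℕ} (f : EuclideanSpace ℝ (Fin d) → ℝ) (i : Fin d)
    (x : EuclideanSpace ℝ (Fin d)) : ℝ :=
  fderiv ℝ f x (EuclideanSpace.single i 1)

open scoped Topology Gradient RealInnerProductSpace

section Cutoff

variable {E : Type*} [NormedAddCommGroup E] [NormedSpace ℝ E] [HasContDiffBump E]

/-- The standard cutoff function at scale `n + 1`: a fixed smooth bump function, equal to `1` on the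
unit ball and supported in the ball of radius `2`, rescaled by `n + 1`. -/
noncomputable def cutoff (n : ℕ) (x : E) : ℝ :=
  (⟨1, 2, one_pos, one_lt_two⟩ : ContDiffBump (0 : E)) ((1 / ((n : ℝ) + 1)) • x)

theorem contDiff_cutoff (n : ℕ) : ContDiff ℝ 1 (cutoff n : E → ℝ) :=
  (ContDiffBump.contDiff _).comp (contDiff_const_smul _)

theorem norm_cutoff_le_one (n : ℕ) (x : E) : ‖cutoff n x‖ ≤ 1 := by
  rw [cutoff, Real.norm_of_nonneg (ContDiffBump.nonneg _)]
  exact ContDiffBump.le_one _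

theorem tendsto_cutoff (x : E) : Tendsto (fun n => cutoff n x) atTop (𝓝 1) := by
  let f : ContDiffBump (0 : E) := ⟨1, 2, one_pos, one_lt_two⟩
  have hscale : Tendsto (fun n : ℕ => (1 / ((n : ℝ) + 1)) • x) atTop (𝓝 0) := by
    simpa using (tendsto_one_div_add_atTop_nhds_zero_nat (𝕜 := ℝ)).smul_const x
  have hf0 : f 0 = 1 := f.one_of_mem_closedBall (Metric.mem_closedBall_self zero_le_one)
  exact hf0 ▸ (f.continuous.tendsto 0).comp hscale

variable [FiniteDimensional ℝ E]

theorem hasCompactSupport_cutoff (n : ℕ) : HasCompactSupport (cutoff n : E → ℝ) :=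
  (ContDiffBump.hasCompactSupport _).comp_smul (by positivity)

theorem tendstoUniformly_fderiv_cutoff :
    TendstoUniformly (fun n => fderiv ℝ (cutoff n : E → ℝ)) 0 atTop := by
  let f : ContDiffBump (0 : E) := ⟨1, 2, one_pos, one_lt_two⟩
  obtain ⟨C, hC⟩ := (f.hasCompactSupport.fderiv ℝ).exists_bound_of_continuous
    ((f.contDiff (n := 1)).continuous_fderiv one_ne_zero)
  have hbound (n : ℕ) (x : E) : ‖fderiv ℝ (cutoff n) x‖ ≤ 1 / ((n : ℝ) + 1) * C := by
    have hfderiv : fderiv ℝ (cutoff n) x = _ := fderiv_comp_smul (f := f) _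
    rw [hfderiv, norm_smul, Real.norm_of_nonneg (by positivity)]
    gcongr
    exact hC _
  have hlim : Tendsto (fun n : ℕ => 1 / ((n : ℝ) + 1) * C) atTop (𝓝 0) := by
    simpa using (tendsto_one_div_add_atTop_nhds_zero_nat (𝕜 := ℝ)).mul_const C
  rw [Metric.tendstoUniformly_iff]
  intro ε hε
  filter_upwards [hlim.eventually_lt_const hε] with n hn x
  simpa using (hbound n x).trans_lt hn

end Cutoff

section Divergence

variable {E ι : Type*} [Fintype ι] [NormedAddCommGroup E] [NormedSpace ℝ E] [FiniteDimensional ℝ E]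
  [MeasurableSpace E] [BorelSpace E] {μ : Measure E}

theorem tendsto_integral_cutoff_mul {g : E → ℝ} (hg : Integrable g μ) :
    Tendsto (fun n => ∫ x, cutoff n x * g x ∂μ) atTop (𝓝 (∫ x, g x ∂μ)) := by
  refine tendsto_integral_of_dominated_convergence (fun x => ‖g x‖)
    (fun n => (contDiff_cutoff n).continuous.aestronglyMeasurable.mul hg.aestronglyMeasurable)
    hg.norm (fun n => .of_forall fun x => ?_) (.of_forall fun x => ?_)
  · rw [norm_mul]
    exact mul_le_of_le_one_left (norm_nonneg _) (norm_cutoff_le_one n x)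
  · simpa using (tendsto_cutoff x).mul_const (g x)

theorem tendsto_integral_fderiv_cutoff_mul {g : E → ℝ} (hg : Integrable g μ) (v : E) :
    Tendsto (fun n => ∫ x, fderiv ℝ (cutoff n) x v * g x ∂μ) atTop (𝓝 0) := by
  have hmeas (n : ℕ) : AEStronglyMeasurable (fun x : E => fderiv ℝ (cutoff n) x v) μ :=
    (((contDiff_cutoff n).continuous_fderiv one_ne_zero).clm_apply
      continuous_const).aestronglyMeasurable
  have hsmall : ∀ᶠ n in atTop, ∀ x : E, ‖fderiv ℝ (cutoff n) x‖ < 1 := by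
    simpa using Metric.tendstoUniformly_iff.1 (tendstoUniformly_fderiv_cutoff (E := E)) 1 one_pos
  rw [← integral_zero E ℝ (μ := μ)]
  refine tendsto_integral_filter_of_dominated_convergence (fun x => ‖v‖ * ‖g x‖)
    (.of_forall fun n => (hmeas n).mul hg.aestronglyMeasurable) ?_
    (hg.norm.const_mul _) (.of_forall fun x => ?_)
  · filter_upwards [hsmall] with n hn
    refine .of_forall fun x => ?_
    rw [norm_mul]
    gcongr
    simpa using (fderiv ℝ (cutoff n) x).le_of_opNorm_le (hn x).le v
  · have hlim : Tendsto (fun n => fderiv ℝ (cutoff n) x) atTop (𝓝 0) :=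
      tendstoUniformly_fderiv_cutoff.tendsto_at x
    simpa using (hlim.eval_const v).mul_const (g x)

variable [μ.IsAddHaarMeasure]

theorem integral_mul_sum_fderiv_eq_neg {χ : E → ℝ} (hχ : ContDiff ℝ 1 χ)
    (hχc : HasCompactSupport χ) {F : ι → E → ℝ} (hF : ∀ i, ContDiff ℝ 1 (F i)) (v : ι → E) :
    ∫ x, χ x * ∑ i, fderiv ℝ (F i) x (v i) ∂μ = -∑ i, ∫ x, fderiv ℝ χ x (v i) * F i x ∂μ := by
  have hdF (i : ι) : Continuous fun x => fderiv ℝ (F i) x (v i) :=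
    ((hF i).continuous_fderiv one_ne_zero).clm_apply continuous_const
  have hdχ (i : ι) : Continuous fun x => fderiv ℝ χ x (v i) :=
    (hχ.continuous_fderiv one_ne_zero).clm_apply continuous_const
  have hχdF (i : ι) : Integrable (fun x => χ x * fderiv ℝ (F i) x (v i)) μ :=
    (hχ.continuous.mul (hdF i)).integrable_of_hasCompactSupport hχc.mul_right
  simp_rw [Finset.mul_sum]
  rw [integral_finsetSum _ fun i _ => hχdF i, ← Finset.sum_neg_distrib]
  refine Finset.sum_congr rfl fun i _ => ?_
  exact integral_mul_fderiv_eq_neg_fderiv_mul_of_integrable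
    (((hdχ i).mul (hF i).continuous).integrable_of_hasCompactSupport
      (hχc.fderiv_apply ℝ (v i)).mul_right)
    (hχdF i)
    ((hχ.continuous.mul (hF i).continuous).integrable_of_hasCompactSupport hχc.mul_right)
    (fun x _ => hχ.differentiable one_ne_zero x)
    (fun x _ => (hF i).differentiable one_ne_zero x)

theorem integral_sum_fderiv_eq_zero {F : ι → E → ℝ} (hF : ∀ i, ContDiff ℝ 1 (F i))
    (hFint : ∀ i, Integrable (F i) μ) (v : ι → E)
    (hdiv : Integrable (fun x => ∑ i, fderiv ℝ (F i) x (v i)) μ) :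
    ∫ x, ∑ i, fderiv ℝ (F i) x (v i) ∂μ = 0 := by
  have hzero : Tendsto (fun n => -∑ i, ∫ x, fderiv ℝ (cutoff n) x (v i) * F i x ∂μ)
      atTop (𝓝 0) := by
    simpa using (tendsto_finsetSum Finset.univ fun i _ =>
      tendsto_integral_fderiv_cutoff_mul (hFint i) (v i)).neg
  refine tendsto_nhds_unique (tendsto_integral_cutoff_mul hdiv) (hzero.congr fun n => ?_)
  exact (integral_mul_sum_fderiv_eq_neg (contDiff_cutoff n) (hasCompactSupport_cutoff n) hF v).symm

end Divergence

section GibbsMeasure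

variable {E : Type*} [MeasureSpace E] {V : E → ℝ}

/-- The Gibbs measure `e^{−V} dx` of the potential `V`, not normalized to be a probability
measure; it is the reference measure `γ` of the entropy. -/
noncomputable def gibbsMeasure (V : E → ℝ) : Measure E :=
  volume.withDensity fun x => ENNReal.ofReal (Real.exp (-V x))

theorem isFiniteMeasure_gibbsMeasure (hV : Integrable fun x => Real.exp (-V x)) :
    IsFiniteMeasure (gibbsMeasure V) :=
  isFiniteMeasure_withDensity_ofReal hV.2

theorem integral_gibbsMeasure (hV : Measurable V) (g : E → ℝ) :
    ∫ x, g x ∂gibbsMeasure V = ∫ x, Real.exp (-V x) * g x := by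
  rw [gibbsMeasure, integral_withDensity_eq_integral_toReal_smul (by fun_prop)
    (.of_forall fun _ => ENNReal.ofReal_lt_top)]
  simp only [ENNReal.toReal_ofReal (Real.exp_pos _).le, smul_eq_mul]

theorem integrable_gibbsMeasure_iff (hV : Measurable V) {g : E → ℝ} :
    Integrable g (gibbsMeasure V) ↔ Integrable fun x => Real.exp (-V x) * g x := by
  rw [gibbsMeasure, integrable_withDensity_iff_integrable_smul' (by fun_prop)
    (.of_forall fun _ => ENNReal.ofReal_lt_top)]
  simp only [ENNReal.toReal_ofReal (Real.exp_pos _).le, smul_eq_mul]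

end GibbsMeasure

section PartialDerivatives

variable {d : ℕ} {f g V : EuclideanSpace ℝ (Fin d) → ℝ} {x : EuclideanSpace ℝ (Fin d)}

theorem contDiff_pd {m n : WithTop ℕ∞} (hf : ContDiff ℝ n f) (hmn : m + 1 ≤ n) (i : Fin d) :
    ContDiff ℝ m (pd f i) :=
  (hf.fderiv_right hmn).clm_apply contDiff_const

theorem pd_mul (hf : DifferentiableAt ℝ f x) (hg : DifferentiableAt ℝ g x) (i : Fin d) :
    pd (fun y => f y * g y) i x = f x * pd g i x + g x * pd f i x := by
  simp [pd, fderiv_fun_mul hf hg]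

theorem pd_exp_neg (hV : DifferentiableAt ℝ V x) (i : Fin d) :
    pd (fun y => Real.exp (-V y)) i x = -(Real.exp (-V x) * pd V i x) := by
  simp [pd, fderiv_exp hV.fun_neg, fderiv_fun_neg]

theorem gradient_apply (f : EuclideanSpace ℝ (Fin d) → ℝ) (x : EuclideanSpace ℝ (Fin d))
    (i : Fin d) : ∇ f x i = pd f i x := by
  rw [pd, ← inner_gradient_left, EuclideanSpace.inner_single_right]
  simp

theorem inner_gradient_gradient (f g : EuclideanSpace ℝ (Fin d) → ℝ)
    (x : EuclideanSpace ℝ (Fin d)) : ⟪∇ f x, ∇ g x⟫ = ∑ i, pd f i x * pd g i x := by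
  simp only [PiLp.inner_apply, gradient_apply, RCLike.inner_apply, conj_trivial,
    mul_comm (pd g _ x)]

theorem norm_pd_le (f : EuclideanSpace ℝ (Fin d) → ℝ) (i : Fin d) (x : EuclideanSpace ℝ (Fin d)) :
    ‖pd f i x‖ ≤ ‖∇ f x‖ :=
  gradient_apply f x i ▸ PiLp.norm_apply_le _ i

end PartialDerivatives

section Gradient

variable {F : Type*} [NormedAddCommGroup F] [InnerProductSpace ℝ F] [CompleteSpace F]

theorem norm_gradient (f : F → ℝ) (x : F) : ‖∇ f x‖ = ‖fderiv ℝ f x‖ :=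
  LinearIsometryEquiv.norm_map _ _

theorem continuous_gradient {f : F → ℝ} (hf : ContDiff ℝ 1 f) : Continuous (∇ f) :=
  (InnerProductSpace.toDual ℝ F).symm.continuous.comp (hf.continuous_fderiv one_ne_zero)

theorem gradient_comp {φ : ℝ → ℝ} {f : F → ℝ} {x : F} (hφ : DifferentiableAt ℝ φ (f x))
    (hf : DifferentiableAt ℝ f x) : ∇ (fun y => φ (f y)) x = deriv φ (f x) • ∇ f x := by
  have hfderiv : fderiv ℝ (fun y => φ (f y)) x = deriv φ (f x) • fderiv ℝ f x :=
    (hφ.hasDerivAt.comp_hasFDerivAt x hf.hasFDerivAt).fderiv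
  rw [gradient, hfderiv, map_smul]
  simp [gradient]

end Gradient

section Generator

variable {d : ℕ} {V f g : EuclideanSpace ℝ (Fin d) → ℝ}

/-- The Kolmogorov–Fokker–Planck operator `L f = Δf − ∇V·∇f`, in coordinates. -/
noncomputable def kfpGenerator (V f : EuclideanSpace ℝ (Fin d) → ℝ)
    (x : EuclideanSpace ℝ (Fin d)) : ℝ :=
  (∑ i, pd (pd f i) i x) - ∑ i, pd V i x * pd f i x

theorem continuous_kfpGenerator (hV : ContDiff ℝ 1 V) (hf : ContDiff ℝ 2 f) :
    Continuous (kfpGenerator V f) := by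
  have hpf (i : Fin d) : ContDiff ℝ 1 (pd f i) := contDiff_pd hf one_add_one_eq_two.le i
  have hppf (i : Fin d) : Continuous (pd (pd f i) i) :=
    (contDiff_pd (m := 0) (hpf i) (zero_add 1).le i).continuous
  have hpV (i : Fin d) : Continuous (pd V i) :=
    (contDiff_pd (m := 0) hV (zero_add 1).le i).continuous
  exact (continuous_finsetSum _ fun i _ => hppf i).sub
    (continuous_finsetSum _ fun i _ => (hpV i).mul (hpf i).continuous)

theorem sum_pd_exp_neg_mul (hV : ContDiff ℝ 1 V) (hf : ContDiff ℝ 2 f) (hg : ContDiff ℝ 1 g)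
    (x : EuclideanSpace ℝ (Fin d)) :
    ∑ i, pd (fun y => Real.exp (-V y) * (g y * pd f i y)) i x =
      Real.exp (-V x) * (g x * kfpGenerator V f x) + Real.exp (-V x) * ⟪∇ g x, ∇ f x⟫ := by
  have hterm (i : Fin d) : pd (fun y => Real.exp (-V y) * (g y * pd f i y)) i x =
      Real.exp (-V x) * (g x * (pd (pd f i) i x - pd V i x * pd f i x)) +
        Real.exp (-V x) * (pd g i x * pd f i x) := by
    have hVx : DifferentiableAt ℝ V x := hV.differentiable one_ne_zero x
    have hgx : DifferentiableAt ℝ g x := hg.differentiable one_ne_zero x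
    have hfx : DifferentiableAt ℝ (pd f i) x :=
      (contDiff_pd hf one_add_one_eq_two.le i).differentiable one_ne_zero x
    rw [pd_mul hVx.fun_neg.exp (hgx.fun_mul hfx), pd_mul hgx hfx, pd_exp_neg hVx]
    ring
  simp_rw [hterm, Finset.sum_add_distrib, ← Finset.mul_sum, Finset.sum_sub_distrib,
    inner_gradient_gradient, kfpGenerator]

theorem integral_mul_kfpGenerator (hV : ContDiff ℝ 1 V) (hf : ContDiff ℝ 2 f) (hg : ContDiff ℝ 1 g)
    (hgf : ∀ i, Integrable (fun x => g x * pd f i x) (gibbsMeasure V))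
    (hgL : Integrable (fun x => g x * kfpGenerator V f x) (gibbsMeasure V))
    (hgrad : Integrable (fun x => ⟪∇ g x, ∇ f x⟫) (gibbsMeasure V)) :
    ∫ x, g x * kfpGenerator V f x ∂gibbsMeasure V = -∫ x, ⟪∇ g x, ∇ f x⟫ ∂gibbsMeasure V := by
  have hVm : Measurable V := hV.continuous.measurable
  have hfield (i : Fin d) : ContDiff ℝ 1 fun x => Real.exp (-V x) * (g x * pd f i x) :=
    hV.neg.exp.mul (hg.mul (contDiff_pd hf one_add_one_eq_two.le i))
  simp_rw [integrable_gibbsMeasure_iff hVm] at hgf hgL hgrad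
  rw [eq_neg_iff_add_eq_zero, integral_gibbsMeasure hVm, integral_gibbsMeasure hVm,
    ← integral_add hgL hgrad]
  have hdiv := hgL.add hgrad
  simp_rw [Pi.add_def, ← sum_pd_exp_neg_mul hV hf hg] at hdiv ⊢
  exact integral_sum_fderiv_eq_zero hfield hgf (fun i => EuclideanSpace.single i 1) hdiv

theorem integral_comp_mul_kfpGenerator (hV : ContDiff ℝ 1 V)
    (hVint : Integrable fun x => Real.exp (-V x)) {U K : Set ℝ} (hU : IsOpen U) (hK : IsCompact K)
    (hKU : K ⊆ U) {φ : ℝ → ℝ} (hφ : ContDiffOn ℝ 1 φ U) (hf : ContDiff ℝ 2 f)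
    (hfK : ∀ x, f x ∈ K) {A B : ℝ} (hgrad : ∀ x, ‖∇ f x‖ ≤ A)
    (hgen : ∀ x, ‖kfpGenerator V f x‖ ≤ B) :
    ∫ x, φ (f x) * kfpGenerator V f x ∂gibbsMeasure V =
      -∫ x, deriv φ (f x) * ‖∇ f x‖ ^ 2 ∂gibbsMeasure V := by
  have := isFiniteMeasure_gibbsMeasure hVint
  have hf1 : ContDiff ℝ 1 f := hf.of_le one_le_two
  have hφf : ContDiff ℝ 1 fun x => φ (f x) := hφ.comp_contDiff hf1 fun x => hKU (hfK x)
  have hφ' : ContinuousOn (deriv φ) U := hφ.continuousOn_deriv_of_isOpen hU le_rfl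
  have hpf (i : Fin d) : Continuous (pd f i) :=
    (contDiff_pd hf one_add_one_eq_two.le i).continuous
  obtain ⟨C₀, hC₀⟩ := hK.exists_bound_of_continuousOn (hφ.continuousOn.mono hKU)
  obtain ⟨C₁, hC₁⟩ := hK.exists_bound_of_continuousOn (hφ'.mono hKU)
  have hinner (x : EuclideanSpace ℝ (Fin d)) :
      ⟪∇ (fun y => φ (f y)) x, ∇ f x⟫ = deriv φ (f x) * ‖∇ f x‖ ^ 2 := by
    have hφx : DifferentiableAt ℝ φ (f x) :=
      (hφ.contDiffAt (hU.mem_nhds (hKU (hfK x)))).differentiableAt one_ne_zero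
    rw [gradient_comp hφx (hf1.differentiable one_ne_zero x), real_inner_smul_left,
      real_inner_self_eq_norm_sq]
  simp_rw [← hinner]
  refine integral_mul_kfpGenerator hV hf hφf (fun i => ?_) ?_ ?_
  · exact .of_bound (hφf.continuous.mul (hpf i)).aestronglyMeasurable (C₀ * A)
      (.of_forall fun x => norm_mul_le_of_le (hC₀ _ (hfK x)) ((norm_pd_le f i x).trans (hgrad x)))
  · exact .of_bound (hφf.continuous.mul (continuous_kfpGenerator hV hf)).aestronglyMeasurable
      (C₀ * B) (.of_forall fun x => norm_mul_le_of_le (hC₀ _ (hfK x)) (hgen x))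
  · simp_rw [hinner]
    refine .of_bound ((hφ'.comp_continuous hf.continuous fun x => hKU (hfK x)).mul
      ((continuous_gradient hf1).norm.pow 2)).aestronglyMeasurable (C₁ * A ^ 2)
      (.of_forall fun x => norm_mul_le_of_le (hC₁ _ (hfK x)) ?_)
    rw [norm_pow, norm_norm]
    exact pow_le_pow_left₀ (norm_nonneg _) (hgrad x) 2

end Generator

section TimeDerivative

theorem hasDerivAt_integral_comp {X : Type*} [TopologicalSpace X] [MeasurableSpace X]
    [OpensMeasurableSpace X] {μ : Measure X} [IsFiniteMeasure μ] {U K : Set ℝ} (hU : IsOpen U)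
    (hK : IsCompact K) (hKU : K ⊆ U) {ψ : ℝ → ℝ} (hψ : ContDiffOn ℝ 1 ψ U) {u u' : ℝ → X → ℝ}
    {t C : ℝ} (hu : ∀ s, Continuous (u s)) (huK : ∀ s x, u s x ∈ K) (hu't : Continuous (u' t))
    (huu' : ∀ᶠ s in 𝓝 t, ∀ x, HasDerivAt (fun r => u r x) (u' s x) s)
    (hbound : ∀ᶠ s in 𝓝 t, ∀ x, ‖u' s x‖ ≤ C) :
    HasDerivAt (fun s => ∫ x, ψ (u s x) ∂μ) (∫ x, deriv ψ (u t x) * u' t x ∂μ) t := by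
  have hψ' : ContinuousOn (deriv ψ) U := hψ.continuousOn_deriv_of_isOpen hU le_rfl
  have hψu (s : ℝ) : Continuous fun x => ψ (u s x) :=
    hψ.continuousOn.comp_continuous (hu s) fun x => hKU (huK s x)
  have hψ'u : Continuous fun x => deriv ψ (u t x) :=
    hψ'.comp_continuous (hu t) fun x => hKU (huK t x)
  have hψd {y : ℝ} (hy : y ∈ K) : HasDerivAt ψ (deriv ψ y) y :=
    ((hψ.contDiffAt (hU.mem_nhds (hKU hy))).differentiableAt one_ne_zero).hasDerivAt
  obtain ⟨C₀, hC₀⟩ := hK.exists_bound_of_continuousOn (hψ.continuousOn.mono hKU)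
  obtain ⟨C₁, hC₁⟩ := hK.exists_bound_of_continuousOn (hψ'.mono hKU)
  refine (hasDerivAt_integral_of_dominated_loc_of_deriv_le (bound := fun _ => C₁ * C)
    (F' := fun s x => deriv ψ (u s x) * u' s x) (huu'.and hbound)
    (.of_forall fun s => (hψu s).aestronglyMeasurable)
    (.of_bound (hψu t).aestronglyMeasurable C₀ (.of_forall fun x => hC₀ _ (huK t x)))
    (hψ'u.mul hu't).aestronglyMeasurable ?_ (integrable_const _) ?_).2
  · exact .of_forall fun x s hs => norm_mul_le_of_le (hC₁ _ (huK s x)) (hs.2 x)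
  · exact .of_forall fun x s hs => (hψd (huK s x)).comp s (hs.1 x)

variable {E G : Type*} [NormedAddCommGroup E] [NormedSpace ℝ E] [NormedAddCommGroup G]
  [NormedSpace ℝ G] {ρ : ℝ × E → G} {t : ℝ} {x : E}

theorem norm_deriv_prodMk_left_le (hρ : DifferentiableAt ℝ ρ (t, x)) :
    ‖deriv (fun s => ρ (s, x)) t‖ ≤ ‖fderiv ℝ ρ (t, x)‖ := by
  have hderiv : fderiv ℝ (fun s => ρ (s, x)) t = _ :=
    (hρ.hasFDerivAt.comp t (hasFDerivAt_prodMk_left t x)).fderiv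
  rw [norm_deriv_eq_norm_fderiv, hderiv]
  exact (ContinuousLinearMap.opNorm_comp_le _ _).trans
    (mul_le_of_le_one_right (norm_nonneg _) (ContinuousLinearMap.norm_inl_le_one ℝ ℝ E))

theorem norm_fderiv_prodMk_right_le (hρ : DifferentiableAt ℝ ρ (t, x)) :
    ‖fderiv ℝ (fun y => ρ (t, y)) x‖ ≤ ‖fderiv ℝ ρ (t, x)‖ := by
  have hfderiv : fderiv ℝ (fun y => ρ (t, y)) x = _ :=
    (hρ.hasFDerivAt.comp x (hasFDerivAt_prodMk_right t x)).fderiv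
  rw [hfderiv]
  exact (ContinuousLinearMap.opNorm_comp_le _ _).trans
    (mul_le_of_le_one_right (norm_nonneg _) (ContinuousLinearMap.norm_inr_le_one ℝ ℝ E))

end TimeDerivative

theorem entropy_derivative_along_KFP_general {d : ℕ} {V : EuclideanSpace ℝ (Fin d) → ℝ}
    (hV : ContDiff ℝ 1 V) (hVint : Integrable fun x => Real.exp (-V x)) {U K : Set ℝ}
    (hU : IsOpen U) (hK : IsCompact K) (hKU : K ⊆ U) {ψ : ℝ → ℝ} (hψ : ContDiffOn ℝ 2 ψ U)
    {ρ : ℝ × EuclideanSpace ℝ (Fin d) → ℝ} (hρ : ContDiff ℝ 1 ρ) (hρK : ∀ p, ρ p ∈ K) {t C : ℝ}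
    (hρt : ContDiff ℝ 2 fun x => ρ (t, x)) (hρder : ∀ᶠ s in 𝓝 t, ∀ x, ‖fderiv ℝ ρ (s, x)‖ ≤ C)
    (hρeq : ∀ x, deriv (fun s => ρ (s, x)) t = kfpGenerator V (fun y => ρ (t, y)) x) :
    HasDerivAt (fun s => ∫ x, ψ (ρ (s, x)) ∂gibbsMeasure V)
      (-∫ x, deriv (deriv ψ) (ρ (t, x)) * ‖∇ (fun y => ρ (t, y)) x‖ ^ 2 ∂gibbsMeasure V) t := by
  have := isFiniteMeasure_gibbsMeasure hVint
  have hρd : Differentiable ℝ ρ := hρ.differentiable one_ne_zero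
  have hρtime : ∀ᶠ s in 𝓝 t, ∀ x, ‖deriv (fun r => ρ (r, x)) s‖ ≤ C :=
    hρder.mono fun s hs x => (norm_deriv_prodMk_left_le (hρd _)).trans (hs x)
  have hρgrad (x : EuclideanSpace ℝ (Fin d)) : ‖∇ (fun y => ρ (t, y)) x‖ ≤ C :=
    (norm_gradient _ x).trans_le
      ((norm_fderiv_prodMk_right_le (hρd _)).trans (hρder.self_of_nhds x))
  have hgen (x : EuclideanSpace ℝ (Fin d)) : ‖kfpGenerator V (fun y => ρ (t, y)) x‖ ≤ C :=
    hρeq x ▸ hρtime.self_of_nhds x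
  have hψ' : ContDiffOn ℝ 1 (deriv ψ) U := hψ.deriv_of_isOpen hU one_add_one_eq_two.le
  have hderiv := hasDerivAt_integral_comp (μ := gibbsMeasure V) (u := fun s x => ρ (s, x))
    (u' := fun s x => deriv (fun r => ρ (r, x)) s) hU hK hKU (hψ.of_le one_le_two)
    (fun s => by fun_prop) (fun s x => hρK (s, x))
    (funext hρeq ▸ continuous_kfpGenerator hV hρt)
    (.of_forall fun s x => DifferentiableAt.hasDerivAt (by fun_prop)) hρtime
  simp_rw [hρeq] at hderiv
  rwa [integral_comp_mul_kfpGenerator hV hVint hU hK hKU hψ' hρt (fun x => hρK (t, x)) hρgrad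
    hgen] at hderiv

/-- Along the Kolmogorov–Fokker–Planck flow `∂_t ρ = Δρ − ∇V·∇ρ`, the
entropy `Ψ(ρ_t) = ∫ ψ(ρ_t) dγ` is differentiable in `t` with derivative
`−P(ρ_t) = −∫ ψ''(ρ_t) |∇ρ_t|² dγ`. -/
theorem entropy_derivative_along_KFP
    (d : ℕ)
    (V : EuclideanSpace ℝ (Fin d) → ℝ) (hV : ContDiff ℝ 2 V)
    (hVbdd : ∃ C, ∀ x, ‖iteratedFDeriv ℝ 2 V x‖ ≤ C)
    (hVint : Integrable (fun x => Real.exp (-V x)))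
    (γ : Measure (EuclideanSpace ℝ (Fin d)))
    (hγ : γ = volume.withDensity fun x => ENNReal.ofReal (Real.exp (-V x)))
    (h : ℝ → ℝ) (hh : ContDiffOn ℝ 2 h (Ioi 0)) (hconc : ConcaveOn ℝ (Ioi 0) h)
    (hmono : MonotoneOn h (Ioi 0)) (hpos : ∀ x ∈ Ioi (0 : ℝ), 0 < h x)
    (ψ : ℝ → ℝ) (hψC2 : ContDiffOn ℝ 2 ψ (Ioi 0))
    (hψ'' : ∀ x ∈ Ioi (0 : ℝ), deriv (deriv ψ) x = 1 / h x)
    (hψ1 : ψ 1 = 0) (hψ'1 : deriv ψ 1 = 0)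
    (ρ : ℝ × EuclideanSpace ℝ (Fin d) → ℝ) (hρ : ContDiff ℝ (⊤ : ℕ∞) ρ)
    (m M : ℝ) (hm : 0 < m) (hbounds : ∀ p, ρ p ∈ Icc m M)
    (hρder : ∀ (n : ℕ) (T : ℝ), ∃ C, ∀ p : ℝ × EuclideanSpace ℝ (Fin d),
      p.1 ∈ Icc 0 T → ‖iteratedFDeriv ℝ n ρ p‖ ≤ C)
    (hρeq : ∀ t ≥ (0 : ℝ), ∀ x, deriv (fun s => ρ (s, x)) t =
      (∑ i, pd (pd (fun z => ρ (t, z)) i) i x)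
        - ∑ i, pd V i x * pd (fun z => ρ (t, z)) i x) :
    ∀ t > (0 : ℝ),
      HasDerivAt (fun s => ∫ x, ψ (ρ (s, x)) ∂γ)
        (-(∫ x, deriv (deriv ψ) (ρ (t, x)) * ‖gradient (fun y => ρ (t, y)) x‖ ^ 2 ∂γ))
        t := by
  intro t ht
  obtain ⟨C, hC⟩ := hρder 1 (2 * t)
  have hρder_near : ∀ᶠ s in 𝓝 t, ∀ x, ‖fderiv ℝ ρ (s, x)‖ ≤ C := by
    filter_upwards [Icc_mem_nhds ht (by linarith : t < 2 * t)] with s hs x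
    simpa only [norm_iteratedFDeriv_one] using hC (s, x) hs
  exact hγ ▸ entropy_derivative_along_KFP_general (hV.of_le one_le_two) hVint isOpen_Ioi
    isCompact_Icc (fun y hy => hm.trans_le hy.1) hψC2 (hρ.of_le (by simp)) hbounds
    (contDiff_infty.1 (hρ.comp (contDiff_prodMk_right t)) 2) hρder_near (hρeq t ht.le)
end
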